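/- arXiv:0912.0405 — 3 statements merged into one kernel-verified Lean document; each statement's English description precedes it below -/
import Mathlib

section
/- Let n ≥ 2 and let α, β ∈ B_n. If α^M and β^M commute for some non-zero integer M, then α^{n!} and β^{n!} commute. -/
open FreeGroup in
/-- The braid relations on `m` strands (generators indexed 0-based by `Fin (m-1)`). -/
def braidRels (m : ℕ) : Set (FreeGroup (Fin (m - 1))) :=
  {r | ∃ i j : Fin (m - 1), (i.val + 2 ≤ j.val ∨ j.val + 2 ≤ i.val) ∧
        r = of i * of j * (of j * of i)⁻¹} ∪
  {r | ∃ i j : Fin (m - 1), (i.val + 1 = j.val ∨ j.val + 1 = i.val) ∧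
        r = of i * of j * of i * (of j * of i * of j)⁻¹}

/-- The braid group on `m` strands. -/
abbrev BraidGroup (m : ℕ) := PresentedGroup (braidRels m)

/-- The Artin generator `σ_i` (1-based index `1 ≤ i ≤ m-1`); junk value `1` out of range. -/
def braidGen (m : ℕ) (i : ℕ) : BraidGroup m :=
  if h : 1 ≤ i ∧ i ≤ m - 1 then PresentedGroup.of ⟨i - 1, by omega⟩ else 1

/-- A braid is periodic if some positive power of it is central. -/
def IsPeriodic {m : ℕ} (β : BraidGroup m) : Prop :=
  ∃ k : ℕ, 1 ≤ k ∧ β ^ k ∈ Subgroup.center (BraidGroup m)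

/-- The elementary Hurwitz move at (0-based) position `i`, as a bijection on `n`-tuples. -/
def hEquiv {G : Type*} [Group G] {n : ℕ} (i : Fin (n - 1)) : Equiv.Perm (Fin n → G) where
  toFun s := fun k =>
    if k.val = i.val then s ⟨i.val + 1, by have := i.isLt; omega⟩
    else if k.val = i.val + 1 then
      (s ⟨i.val + 1, by have := i.isLt; omega⟩)⁻¹ * s ⟨i.val, by have := i.isLt; omega⟩ *
        s ⟨i.val + 1, by have := i.isLt; omega⟩
    else s k
  invFun t := fun k =>
    if k.val = i.val then
      t ⟨i.val, by have := i.isLt; omega⟩ * t ⟨i.val + 1, by have := i.isLt; omega⟩ *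
        (t ⟨i.val, by have := i.isLt; omega⟩)⁻¹
    else if k.val = i.val + 1 then t ⟨i.val, by have := i.isLt; omega⟩
    else t k
  left_inv s := by
    funext k
    have hlt := i.isLt
    rcases k with ⟨kv, hkv⟩
    by_cases h1 : kv = i.val
    · subst h1
      simp [mul_assoc]
    · by_cases h2 : kv = i.val + 1
      · subst h2
        simp
      · simp [h1, h2]
  right_inv t := by
    funext k
    have hlt := i.isLt
    rcases k with ⟨kv, hkv⟩
    by_cases h1 : kv = i.val
    · subst h1
      simp [mul_assoc]
    · by_cases h2 : kv = i.val + 1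
      · subst h2
        simp [mul_assoc]
      · simp [h1, h2]

/-- The (right) Hurwitz action of a word in the generators `σ_1, …, σ_{n-1}` of `B_n`
on `n`-tuples of elements of a group `G`: `hurwitzAct (w₁ * w₂) s = hurwitzAct w₂ (hurwitzAct w₁ s)`. -/
def hurwitzAct {G : Type*} [Group G] {n : ℕ} (w : FreeGroup (Fin (n - 1))) (s : Fin n → G) :
    Fin n → G :=
  (MulOpposite.unop (FreeGroup.lift (fun i => MulOpposite.op (hEquiv (G := G) (n := n) i)) w)) s

/-- The Hurwitz orbit of a braid system. -/
def hurwitzOrbit {G : Type*} [Group G] {n : ℕ} (s : Fin n → G) : Set (Fin n → G) :=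
  {t | ∃ w : FreeGroup (Fin (n - 1)), hurwitzAct w s = t}

/-- The generator `σ_i` (1-based) as a word acting on length-`n` systems. -/
def genWord (n : ℕ) (i : ℕ) : FreeGroup (Fin (n - 1)) :=
  if h : 1 ≤ i ∧ i ≤ n - 1 then FreeGroup.of ⟨i - 1, by omega⟩ else 1

/-- The pure braid word `c_i = (σ_1⁻¹ ⋯ σ_{i-1}⁻¹) σ_i² (σ_{i-1} ⋯ σ_1)`. -/
def cWord (n : ℕ) (i : ℕ) : FreeGroup (Fin (n - 1)) :=
  ((List.range (i - 1)).map (fun t => (genWord n (t + 1))⁻¹)).prod *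
    genWord n i ^ 2 *
    ((List.range (i - 1)).reverse.map (fun t => genWord n (t + 1))).prod

/-- The word `Δ_{(i,j)} = (σ_i σ_{i+1} ⋯ σ_j)(σ_i ⋯ σ_{j-1}) ⋯ (σ_i σ_{i+1})(σ_i)`. -/
def deltaWord (n i j : ℕ) : FreeGroup (Fin (n - 1)) :=
  ((List.range (j - i + 1)).map (fun t =>
    ((List.range (j - t - i + 1)).map (fun u => genWord n (i + u))).prod)).prod

/-- The exponent-sum homomorphism, valued in `Multiplicative ℤ`. -/
def expSumHom {m : ℕ} : BraidGroup m →* Multiplicative ℤ :=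
  PresentedGroup.toGroup (f := fun _ => Multiplicative.ofAdd 1) (by
    rintro r (⟨i, j, -, rfl⟩ | ⟨i, j, -, rfl⟩) <;>
      simp <;> group)

/-- The exponent sum of a braid: `e(σ_i) = 1`. -/
def esum {m : ℕ} (β : BraidGroup m) : ℤ := Multiplicative.toAdd (expSumHom β)

/-- A braid system is reducible if some non-trivial partition of the index set has all
entries from the two parts commuting. -/
def IsReducible {G : Type*} [Group G] {n : ℕ} (s : Fin n → G) : Prop :=
  ∃ I : Set (Fin n), I.Nonempty ∧ Iᶜ.Nonempty ∧ ∀ i ∈ I, ∀ j ∈ Iᶜ, Commute (s i) (s j)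


namespace BraidAux

variable {G : Type*} [Group G]

/-- A sequence satisfying the braid relations (the braid relation only below `N`). -/
structure BraidSeq (s : ℕ → G) (N : ℕ) : Prop where
  comm : ∀ i j, i + 2 ≤ j → Commute (s i) (s j)
  braid : ∀ i, i + 1 < N → s i * s (i + 1) * s i = s (i + 1) * s i * s (i + 1)

/-- The pure braid generators `A_{i,K+1}`. -/
def bA (s : ℕ → G) (K : ℕ) (i : ℕ) : G :=
  if i < K then s i * bA s K (i + 1) * (s i)⁻¹ else s K ^ 2
termination_by K - i

/-- Coset representatives `σ_K ⋯ σ_i`. -/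
def bC (s : ℕ → G) (K : ℕ) (i : ℕ) : G :=
  if i ≤ K then bC s K (i + 1) * s i else 1
termination_by K + 1 - i

/-- subgroup generated by the first `K` generators -/
def bH (s : ℕ → G) (K : ℕ) : Subgroup G := Subgroup.closure {x | ∃ j, j < K ∧ x = s j}

/-- subgroup generated by the `A_{i,K+1}` -/
def bU (s : ℕ → G) (K : ℕ) : Subgroup G := Subgroup.closure {x | ∃ i, i ≤ K ∧ x = bA s K i}

theorem bA_lt (s : ℕ → G) {K i : ℕ} (h : i < K) : bA s K i = s i * bA s K (i + 1) * (s i)⁻¹ := by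
  rw [bA, if_pos h]

theorem bA_last (s : ℕ → G) (K : ℕ) : bA s K K = s K ^ 2 := by
  rw [bA, if_neg (lt_irrefl _)]

theorem bC_le (s : ℕ → G) {K i : ℕ} (h : i ≤ K) : bC s K i = bC s K (i + 1) * s i := by
  rw [bC, if_pos h]

theorem bC_last (s : ℕ → G) (K : ℕ) : bC s K (K + 1) = 1 := by
  rw [bC, if_neg (by omega)]

theorem bA_mem_bU (s : ℕ → G) {K i : ℕ} (h : i ≤ K) : bA s K i ∈ bU s K :=
  Subgroup.subset_closure ⟨i, h, rfl⟩

theorem s_mem_bH (s : ℕ → G) {K i : ℕ} (h : i < K) : s i ∈ bH s K :=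
  Subgroup.subset_closure ⟨i, h, rfl⟩

theorem conj_commute {g a b : G} (h : Commute a b) : Commute (g * a * g⁻¹) (g * b * g⁻¹) := by
  show _ = _
  have h' : a * b = b * a := h
  calc g * a * g⁻¹ * (g * b * g⁻¹) = g * (a * b) * g⁻¹ := by group
    _ = _ := by rw [h']; group

theorem bA_commute_high {s : ℕ → G} {N : ℕ} (hs : BraidSeq s N) {K i j : ℕ} (hi : i ≤ K)
    (hj : j + 2 ≤ i) : Commute (s j) (bA s K i) := by
  induction hi using Nat.decreasingInduction with
  | self => rw [bA_last]; exact (hs.comm _ _ hj).pow_right 2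
  | of_succ i hi ih =>
    rw [bA_lt s (by omega)]
    have h1 := hs.comm _ _ hj
    exact (h1.mul_right (ih (by omega))).mul_right h1.inv_right

theorem bA_commute_low {s : ℕ → G} {N : ℕ} (hs : BraidSeq s N) {K i j : ℕ} (hKN : K < N)
    (hj : j < K) (hi : i < j) : Commute (s j) (bA s K i) := by
  obtain ⟨j, rfl⟩ : ∃ t, j = t + 1 := ⟨j - 1, by omega⟩
  have hi' : i ≤ j := by omega
  clear hi
  induction hi' using Nat.decreasingInduction with
  | self =>
    have h0 : Commute (s j) (bA s K (j + 1 + 1)) := bA_commute_high hs (by omega) (by omega)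
    have h1 := conj_commute (g := s j * s (j + 1)) h0
    rw [bA_lt s (by omega), bA_lt s (by omega)]
    have h2 : s j * s (j + 1) * s j * (s j * s (j + 1))⁻¹ = s (j + 1) := by
      rw [hs.braid j (by omega)]; group
    rw [h2] at h1
    convert h1 using 1
    group
  | of_succ i hi ih =>
    rw [bA_lt s (by omega)]
    have h1 : Commute (s (j + 1)) (s i) := (hs.comm _ _ (by omega)).symm
    exact (h1.mul_right ih).mul_right h1.inv_right

theorem typeB {s : ℕ → G} {N : ℕ} (hs : BraidSeq s N) {K j : ℕ} (hKN : K < N)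
    (hj : j + 1 ≤ K) : s j * bA s K (j + 1) * s j * bA s K (j + 1) =
      bA s K (j + 1) * s j * bA s K (j + 1) * s j := by
  suffices ∀ i, i ≤ K → ∀ j, i = j + 1 → s j * bA s K i * s j * bA s K i =
      bA s K i * s j * bA s K i * s j from this _ hj j rfl
  intro i hi
  induction hi using Nat.decreasingInduction with
  | self =>
    intro j hK
    rw [bA_last]
    have hb := hs.braid j (by omega)
    rw [← hK] at hb
    have hc : Commute (s K) (s j * s K ^ 2 * s j) := by
      show _ = _
      calc s K * (s j * s K ^ 2 * s j) = (s K * s j * s K) * s K * s j := by simp [pow_two, mul_assoc]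
        _ = s j * (s K * (s j * (s K * s j))) := by rw [← hb]; group
        _ = s j * (s K * (s j * s K * s j)) := by group
        _ = _ := by rw [hb]; simp [pow_two, mul_assoc]
    have := (hc.pow_left 2).eq
    calc _ = (s j * s K ^ 2 * s j) * s K ^ 2 := by group
      _ = _ := by rw [← this]; group
  | of_succ i hi ih =>
    intro j hj
    have h0 := ih i rfl
    have hc : Commute (s j) (bA s K (i + 1)) := bA_commute_high hs (by omega) (by omega)
    have hb := hs.braid j (by omega)
    rw [← hj] at hb
    rw [bA_lt s (by omega)]
    generalize bA s K (i + 1) = A at *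
    have e1 : s j = (s i * s j) * s i * (s i * s j)⁻¹ := by rw [← hb]; group
    have e2 : s i * A * (s i)⁻¹ = (s i * s j) * A * (s i * s j)⁻¹ := by
      have : s j * A * (s j)⁻¹ = A := by rw [hc.eq]; group
      calc _ = s i * (s j * A * (s j)⁻¹) * (s i)⁻¹ := by rw [this]
        _ = _ := by group
    rw [e2]
    generalize s i * s j = g at *
    rw [e1]
    calc _ = g * (s i * A * s i * A) * g⁻¹ := by group
      _ = _ := by rw [h0]; group

theorem bU_conj {s : ℕ → G} {N : ℕ} (hs : BraidSeq s N) {K j i : ℕ} (hKN : K < N)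
    (hj : j < K) (hi : i ≤ K) : s j * bA s K i * (s j)⁻¹ ∈ bU s K ∧
      (s j)⁻¹ * bA s K i * s j ∈ bU s K := by
  have triv : Commute (s j) (bA s K i) → s j * bA s K i * (s j)⁻¹ ∈ bU s K ∧
      (s j)⁻¹ * bA s K i * s j ∈ bU s K := by
    intro h
    have e1 : s j * bA s K i * (s j)⁻¹ = bA s K i := by rw [h.eq]; group
    have e2 : (s j)⁻¹ * bA s K i * s j = bA s K i := by rw [mul_assoc, ← h.eq]; group
    rw [e1, e2]
    exact ⟨bA_mem_bU s hi, bA_mem_bU s hi⟩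
  have hB := typeB hs hKN hj
  have hAj := bA_lt s hj
  have m1 := bA_mem_bU s hj.le
  have m2 : bA s K (j + 1) ∈ bU s K := bA_mem_bU s hj
  rcases lt_trichotomy i j with h | rfl | h
  · exact triv (bA_commute_low hs hKN hj h)
  · constructor
    · have : s i * bA s K i * (s i)⁻¹ = (bA s K i)⁻¹ * bA s K (i + 1) * bA s K i := by
        rw [mul_assoc (bA s K i)⁻¹, eq_inv_mul_iff_mul_eq, hAj]
        generalize bA s K (i + 1) = A at *
        calc _ = (s i * A * s i * A) * (s i)⁻¹ * (s i)⁻¹ := by group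
          _ = _ := by rw [hB]; group
      rw [this]
      exact mul_mem (mul_mem (inv_mem m1) m2) m1
    · have : (s i)⁻¹ * bA s K i * s i = bA s K (i + 1) := by rw [hAj]; group
      rw [this]; exact m2
  · rcases Nat.eq_or_lt_of_le (Nat.succ_le_of_lt h) with rfl | h
    · constructor
      · rw [Nat.succ_eq_add_one, ← hAj]; exact m1
      · have : (s j)⁻¹ * bA s K (j + 1) * s j
            = bA s K (j + 1) * bA s K j * (bA s K (j + 1))⁻¹ := by
          rw [eq_mul_inv_iff_mul_eq, hAj]
          generalize bA s K (j + 1) = A at *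
          calc _ = (s j)⁻¹ * (A * s j * A * s j) * (s j)⁻¹ := by group
            _ = _ := by rw [← hB]; group
        rw [Nat.succ_eq_add_one, this]
        exact mul_mem (mul_mem m2 m1) (inv_mem m2)
    · exact triv (bA_commute_high hs hi (by omega))

theorem bU_conj_mem {s : ℕ → G} {N : ℕ} (hs : BraidSeq s N) {K j : ℕ} (hKN : K < N)
    (hj : j < K) {u : G} (hu : u ∈ bU s K) : s j * u * (s j)⁻¹ ∈ bU s K ∧
      (s j)⁻¹ * u * s j ∈ bU s K := by
  induction hu using Subgroup.closure_induction with
  | mem x hx => obtain ⟨i, hi, rfl⟩ := hx; exact bU_conj hs hKN hj hi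
  | one => simp
  | mul x y _ _ hx hy =>
    constructor
    · have := mul_mem hx.1 hy.1
      convert this using 1; group
    · have := mul_mem hx.2 hy.2
      convert this using 1; group
  | inv x _ hx =>
    constructor
    · have := inv_mem hx.1
      convert this using 1; group
    · have := inv_mem hx.2
      convert this using 1; group

theorem bH_conj_mem {s : ℕ → G} {N : ℕ} (hs : BraidSeq s N) {K : ℕ} (hKN : K < N)
    {h : G} (hh : h ∈ bH s K) : ∀ u ∈ bU s K, h * u * h⁻¹ ∈ bU s K ∧ h⁻¹ * u * h ∈ bU s K := by
  induction hh using Subgroup.closure_induction with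
  | mem x hx => obtain ⟨j, hj, rfl⟩ := hx; exact fun u hu => bU_conj_mem hs hKN hj hu
  | one => simp
  | mul x y _ _ hx hy =>
    intro u hu
    constructor
    · have := (hx _ (hy u hu).1).1
      convert this using 1; group
    · have := (hy _ (hx u hu).2).2
      convert this using 1; group
  | inv x _ hx =>
    intro u hu
    have := hx u hu
    simpa using this.symm

/-- `U · H` as a subgroup. -/
def bD {s : ℕ → G} {N : ℕ} (hs : BraidSeq s N) {K : ℕ} (hKN : K < N) : Subgroup G where
  carrier := {g | ∃ u ∈ bU s K, ∃ h ∈ bH s K, g = u * h}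
  one_mem' := ⟨1, one_mem _, 1, one_mem _, by simp⟩
  mul_mem' := by
    rintro _ _ ⟨u, hu, h, hh, rfl⟩ ⟨v, hv, k, hk, rfl⟩
    refine ⟨u * (h * v * h⁻¹), mul_mem hu (bH_conj_mem hs hKN hh v hv).1, h * k, mul_mem hh hk, ?_⟩
    group
  inv_mem' := by
    rintro _ ⟨u, hu, h, hh, rfl⟩
    refine ⟨h⁻¹ * u⁻¹ * h, (bH_conj_mem hs hKN hh _ (inv_mem hu)).2, h⁻¹, inv_mem hh, ?_⟩
    group

theorem bU_le_bD {s : ℕ → G} {N : ℕ} (hs : BraidSeq s N) {K : ℕ} (hKN : K < N) {u : G}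
    (hu : u ∈ bU s K) : u ∈ bD hs hKN := ⟨u, hu, 1, one_mem _, by simp⟩

theorem bH_le_bD {s : ℕ → G} {N : ℕ} (hs : BraidSeq s N) {K : ℕ} (hKN : K < N) {u : G}
    (hu : u ∈ bH s K) : u ∈ bD hs hKN := ⟨1, one_mem _, u, hu, by simp⟩

theorem bC_commute {s : ℕ → G} {N : ℕ} (hs : BraidSeq s N) {K i j : ℕ} (hi : i ≤ K + 1)
    (hj : j + 2 ≤ i) : Commute (s j) (bC s K i) := by
  induction hi using Nat.decreasingInduction with
  | self => rw [bC_last]; exact Commute.one_right _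
  | of_succ i hi ih =>
    rw [bC_le s (by omega)]
    exact (ih (by omega)).mul_right (hs.comm _ _ hj)

theorem bC_shift {s : ℕ → G} {N : ℕ} (hs : BraidSeq s N) {K i j : ℕ} (hKN : K < N)
    (hj : j + 1 ≤ K) (hi : i ≤ j) : bC s K i * s (j + 1) = s j * bC s K i := by
  induction hi using Nat.decreasingInduction with
  | self =>
    have h1 : Commute (s j) (bC s K (j + 1 + 1)) := bC_commute hs (by omega) (by omega)
    have hb := hs.braid j (by omega)
    rw [bC_le s (by omega), bC_le s (by omega)]
    generalize bC s K (j + 1 + 1) = c at *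
    calc _ = c * (s (j + 1) * s j * s (j + 1)) := by group
      _ = (c * s j) * s (j + 1) * s j := by rw [← hb]; group
      _ = _ := by rw [← h1.eq]; group
  | of_succ i hi ih =>
    rw [bC_le s (by omega), mul_assoc, (hs.comm i (j + 1) (by omega)).eq, ← mul_assoc, ih,
      mul_assoc]

theorem bC_sq {s : ℕ → G} {N : ℕ} (hs : BraidSeq s N) {K i : ℕ} (hKN : K < N)
    (hi : i ≤ K) : bC s K (i + 1) * s i ^ 2 * (bC s K (i + 1))⁻¹ ∈ bU s K := by
  induction hi using Nat.decreasingInduction with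
  | self =>
    rw [bC_last, ← bA_last]; simpa using bA_mem_bU s le_rfl
  | of_succ i hi ih =>
    have h1 := (bU_conj_mem hs hKN (j := i) (by omega) ih).2
    have hc : Commute (s i) (bC s K (i + 1 + 1)) := bC_commute hs (by omega) (by omega)
    have hb := hs.braid i (by omega)
    rw [bC_le s (by omega)]
    generalize bC s K (i + 1 + 1) = c at *
    have hd : (s i)⁻¹ * s (i + 1) * s i = s (i + 1) * s i * (s (i + 1))⁻¹ := by
      rw [eq_mul_inv_iff_mul_eq, mul_assoc, mul_assoc, inv_mul_eq_iff_eq_mul, ← mul_assoc,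
        ← mul_assoc, hb]
    have hd2 : (s i)⁻¹ * s (i + 1) ^ 2 * s i = s (i + 1) * s i ^ 2 * (s (i + 1))⁻¹ := by
      calc _ = ((s i)⁻¹ * s (i + 1) * s i) * ((s i)⁻¹ * s (i + 1) * s i) := by simp [pow_two, mul_assoc]
        _ = _ := by rw [hd]; simp [pow_two, mul_assoc]
    have e1 : (s i)⁻¹ * c = c * (s i)⁻¹ := (hc.inv_left).eq
    have e2 : c⁻¹ * s i = s i * c⁻¹ := (hc.inv_right).eq.symm
    convert h1 using 1
    calc _ = c * (s (i + 1) * s i ^ 2 * (s (i + 1))⁻¹) * c⁻¹ := by group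
      _ = (c * (s i)⁻¹) * s (i + 1) ^ 2 * (s i * c⁻¹) := by rw [← hd2]; group
      _ = _ := by rw [← e1, ← e2]; group

theorem bC_mul {s : ℕ → G} {N : ℕ} (hs : BraidSeq s N) {K i j : ℕ} (hKN : K < N)
    (hi : i ≤ K + 1) (hj : j ≤ K) : ∃ i' ≤ K + 1, ∃ d ∈ bD hs hKN, ∃ d' ∈ bD hs hKN,
      bC s K i * s j = d * bC s K i' ∧ bC s K i' * s j = d' * bC s K i := by
  have key : ∀ i, i ≤ K → ∃ d ∈ bD hs hKN, bC s K i * s i = d * bC s K (i + 1) := by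
    intro i hi
    refine ⟨_, bU_le_bD hs hKN (bC_sq hs hKN hi), ?_⟩
    rw [bC_le s hi]; simp [mul_assoc, pow_two]
  rcases lt_trichotomy j i with h | rfl | h
  · rcases Nat.eq_or_lt_of_le (Nat.succ_le_of_lt h) with rfl | h
    · obtain ⟨d, hd, he⟩ := key j hj
      refine ⟨j, by omega, 1, one_mem _, d, hd, ?_, he⟩
      rw [one_mul, bC_le s hj]
    · have hc := (bC_commute hs hi (j := j) (by omega)).eq.symm
      have hm := bH_le_bD hs hKN (s_mem_bH s (K := K) (i := j) (by omega))
      exact ⟨i, hi, _, hm, _, hm, hc, hc⟩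
  · obtain ⟨d, hd, he⟩ := key j hj
    refine ⟨j + 1, by omega, d, hd, 1, one_mem _, he, ?_⟩
    rw [one_mul, bC_le s hj]
  · obtain ⟨j, rfl⟩ : ∃ t, j = t + 1 := ⟨j - 1, by omega⟩
    have hm := bH_le_bD hs hKN (s_mem_bH s (K := K) (i := j) (by omega))
    have hc := bC_shift hs hKN hj (i := i) (by omega)
    exact ⟨i, hi, _, hm, _, hm, hc, hc⟩

theorem bH_succ {s : ℕ → G} {N : ℕ} (hs : BraidSeq s N) {K : ℕ} (hKN : K < N) {g : G}
    (hg : g ∈ bH s (K + 1)) : ∃ i ≤ K + 1, ∃ d ∈ bD hs hKN, g = d * bC s K i := by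
  induction hg using Subgroup.closure_induction_right with
  | one => exact ⟨K + 1, le_rfl, 1, one_mem _, by rw [bC_last]; simp⟩
  | mul_right x hx y hy ih =>
    obtain ⟨i, hi, d, hd, rfl⟩ := ih
    obtain ⟨j, hj, rfl⟩ := hy
    obtain ⟨i', hi', e, he, e', he', h1, h2⟩ := bC_mul hs hKN hi (j := j) (by omega)
    exact ⟨i', hi', d * e, mul_mem hd he, by rw [mul_assoc, h1, mul_assoc]⟩
  | mul_inv_cancel x hx y hy ih =>
    obtain ⟨i, hi, d, hd, rfl⟩ := ih
    obtain ⟨j, hj, rfl⟩ := hy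
    obtain ⟨i', hi', e, he, e', he', h1, h2⟩ := bC_mul hs hKN hi (j := j) (by omega)
    refine ⟨i', hi', d * e'⁻¹, mul_mem hd (inv_mem he'), ?_⟩
    rw [mul_assoc, mul_assoc, mul_inv_eq_iff_eq_mul.mpr]
    rw [mul_assoc, h2]; simp


/-! ### The Artin action -/

open FreeGroup (of)

structure ArtinAct (s : ℕ → G) (N : ℕ) (φ : G →* MulAut (FreeGroup ℕ)) : Prop where
  act0 : ∀ j, j < N → φ (s j) (of j) = of j * of (j + 1) * (of j)⁻¹
  act1 : ∀ j, j < N → φ (s j) (of (j + 1)) = of j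
  act2 : ∀ j, j < N → ∀ i, i ≠ j → i ≠ j + 1 → φ (s j) (of i) = of i

/-- Kill the generator `k`. -/
def kill (k : ℕ) : FreeGroup ℕ →* FreeGroup ℕ :=
  FreeGroup.lift (fun i => if i = k then 1 else of i)

@[simp] theorem kill_self (k : ℕ) : kill k (of k) = 1 := by simp [kill]

theorem kill_ne {k i : ℕ} (h : i ≠ k) : kill k (of i) = of i := by simp [kill, h]

/-- auxiliary permutation representation -/
def rho (k : ℕ) : FreeGroup ℕ →* Equiv.Perm (FreeGroup ℕ × Bool) :=
  FreeGroup.lift (fun i => if i = k then Equiv.swap (1, false) (1, true)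
    else (Equiv.mulLeft (of i)).prodCongr (Equiv.refl Bool))

theorem rho_fst (k : ℕ) (g : FreeGroup ℕ) :
    ∀ p, (rho k g p).1 = kill k g * p.1 := by
  have hpt : ∀ i p, (rho k (of i) p).1 = kill k (of i) * p.1 := by
    intro i p
    by_cases h : i = k
    · subst h
      simp only [rho, FreeGroup.lift_apply_of, if_true, kill_self, one_mul]
      rw [Equiv.swap_apply_def]
      split_ifs with h1 h2
      · rw [h1]
      · rw [h2]
      · rfl
    · rw [kill_ne h]
      simp [rho, h]
  induction g using FreeGroup.induction_on with
  | C1 => simp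
  | of i => exact hpt i
  | inv_of i ih =>
    intro p
    have := hpt i ((rho k (of i))⁻¹ p)
    rw [← Equiv.Perm.mul_apply, mul_inv_cancel, Equiv.Perm.one_apply] at this
    rw [map_inv, map_inv, this]; simp
  | mul x y hx hy =>
    intro p
    rw [map_mul, Equiv.Perm.mul_apply, hx, hy, map_mul, mul_assoc]

theorem kill_eq_one_of_commute {k : ℕ} {g : FreeGroup ℕ} (h : Commute g (of k)) :
    kill k g = 1 := by
  by_contra hne
  have h1 : rho k g (rho k (of k) (1, false)) = rho k (of k) (rho k g (1, false)) := by
    rw [← Equiv.Perm.mul_apply, ← Equiv.Perm.mul_apply, ← map_mul, ← map_mul, h.eq]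
  have h2 : ∀ p, rho k (of k) p = Equiv.swap (1, false) (1, true) p := by
    intro p; simp [rho]
  have h3 : (rho k g (1, false)).1 ≠ 1 := by rw [rho_fst]; simpa using hne
  rw [h2, h2, Equiv.swap_apply_left, Equiv.swap_apply_of_ne_of_ne] at h1
  · have := (rho k g).injective h1
    simp at this
  · intro h; rw [h] at h3; simp at h3
  · intro h; rw [h] at h3; simp at h3

variable {s : ℕ → G} {N : ℕ} {φ : G →* MulAut (FreeGroup ℕ)}

theorem act_inv_of {g : G} {x y : FreeGroup ℕ} (h : φ g x = y) : φ g⁻¹ y = x := by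
  rw [map_inv, ← h]; exact MulAut.inv_apply_self _ _ _

theorem bH_fix (ha : ArtinAct s N φ) {K : ℕ} (hK : K ≤ N) {h : G} (hh : h ∈ bH s K) {i : ℕ}
    (hi : K < i) : φ h (of i) = of i := by
  induction hh using Subgroup.closure_induction with
  | mem x hx => obtain ⟨j, hj, rfl⟩ := hx; exact ha.act2 j (by omega) i (by omega) (by omega)
  | one => simp
  | mul x y _ _ hx hy => rw [map_mul, MulAut.mul_apply, hy, hx]
  | inv x _ hx => exact act_inv_of hx

/-- hom determined on generators -/
theorem hom_ext_of {H : Type*} [Group H] {f g : FreeGroup ℕ →* H} (h : ∀ i, f (of i) = g (of i))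
    (x : FreeGroup ℕ) : f x = g x := by
  have : f = g := FreeGroup.ext_hom f g h
  rw [this]

theorem act_kill_comm (ha : ArtinAct s N φ) {K : ℕ} {i : ℕ} (hK : K < N) (hi : i < K)
    (f : FreeGroup ℕ) : kill (K + 1) (φ (s i) f) = φ (s i) (kill (K + 1) f) := by
  refine hom_ext_of (f := (kill (K + 1)).comp (φ (s i)).toMonoidHom)
    (g := (φ (s i)).toMonoidHom.comp (kill (K + 1))) ?_ f
  intro t
  show kill (K + 1) (φ (s i) (of t)) = φ (s i) (kill (K + 1) (of t))
  by_cases h1 : t = K + 1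
  · subst h1; rw [ha.act2 i (by omega) _ (by omega) (by omega)]; simp
  · rw [kill_ne h1]
    by_cases h2 : t = i
    · subst h2; rw [ha.act0 t (by omega)]
      simp [kill_ne h1, kill_ne (show t + 1 ≠ K + 1 by omega)]
    · by_cases h3 : t = i + 1
      · subst h3; rw [ha.act1 i (by omega), kill_ne (by omega)]
      · rw [ha.act2 i (by omega) t h2 h3, kill_ne h1]

theorem kill_bA (ha : ArtinAct s N φ) {K : ℕ} (hK : K < N) {i : ℕ} (hi : i ≤ K) :
    ∀ f, kill (K + 1) (φ (bA s K i) f) = kill (K + 1) f := by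
  induction hi using Nat.decreasingInduction with
  | self =>
    intro f
    rw [bA_last]
    refine hom_ext_of (f := (kill (K + 1)).comp (φ (s K ^ 2)).toMonoidHom)
      (g := kill (K + 1)) ?_ f
    intro t
    show kill (K + 1) (φ (s K ^ 2) (of t)) = kill (K + 1) (of t)
    rw [pow_two, map_mul, MulAut.mul_apply]
    by_cases h2 : t = K
    · subst h2; simp [ha.act0 t hK, ha.act1 t hK]
    · by_cases h3 : t = K + 1
      · subst h3; simp [ha.act0 K hK, ha.act1 K hK]
      · rw [ha.act2 K hK t h2 h3, ha.act2 K hK t h2 h3]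
  | of_succ i hi ih =>
    intro f
    rw [bA_lt s (by omega), map_mul, map_mul, MulAut.mul_apply, MulAut.mul_apply,
      act_kill_comm ha hK (by omega), ih, ← act_kill_comm ha hK (by omega),
      ← MulAut.mul_apply, ← map_mul]
    simp

theorem kill_bU (ha : ArtinAct s N φ) {K : ℕ} (hK : K < N) {u : G} (hu : u ∈ bU s K) :
    ∀ f, kill (K + 1) (φ u f) = kill (K + 1) f := by
  induction hu using Subgroup.closure_induction with
  | mem x hx => obtain ⟨j, hj, rfl⟩ := hx; exact kill_bA ha hK hj
  | one => simp
  | mul x y _ _ hx hy => intro f; rw [map_mul, MulAut.mul_apply, hx, hy]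
  | inv x _ hx =>
    intro f
    rw [← hx (φ x⁻¹ f), ← MulAut.mul_apply, ← map_mul]; simp

theorem bA_act (ha : ArtinAct s N φ) {K : ℕ} (hK : K < N) {i : ℕ} (hi : i ≤ K) :
    φ (bA s K i) (of (K + 1)) = of i * of (K + 1) * (of i)⁻¹ := by
  induction hi using Nat.decreasingInduction with
  | self => rw [bA_last, pow_two, map_mul, MulAut.mul_apply, ha.act1 K hK, ha.act0 K hK]
  | of_succ i hi ih =>
    have h1 : φ (s i) (of (K + 1)) = of (K + 1) :=
      ha.act2 i (by omega) _ (by omega) (by omega)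
    rw [bA_lt s (by omega), map_mul, map_mul, MulAut.mul_apply, MulAut.mul_apply,
      act_inv_of h1, ih, map_mul, map_mul, h1, map_inv, ha.act1 i (by omega)]

/-- anti-homomorphism sending `x_i` to `A_i` -/
def bT (s : ℕ → G) (K : ℕ) : FreeGroup ℕ →* Gᵐᵒᵖ :=
  FreeGroup.lift (fun i => MulOpposite.op (bA s K i))

theorem bU_push (ha : ArtinAct s N φ) {K : ℕ} (hK : K < N) {u : G} (hu : u ∈ bU s K) :
    ∃ g, φ u (of (K + 1)) = g * of (K + 1) * g⁻¹ ∧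
      bT s K (kill (K + 1) g) = MulOpposite.op u := by
  induction hu using Subgroup.closure_induction with
  | mem x hx =>
    obtain ⟨j, hj, rfl⟩ := hx
    refine ⟨of j, bA_act ha hK hj, ?_⟩
    rw [kill_ne (by omega)]; simp [bT]
  | one => exact ⟨1, by simp, by simp⟩
  | mul x y hx' hy' hx hy =>
    obtain ⟨g, hg, hg'⟩ := hx
    obtain ⟨k, hk, hk'⟩ := hy
    refine ⟨φ x k * g, ?_, ?_⟩
    · rw [map_mul, MulAut.mul_apply, hk, map_mul, map_mul, hg, map_inv]; group
    · rw [map_mul, kill_bU ha hK hx', map_mul, hg', hk', MulOpposite.op_mul]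
  | inv x hx' hx =>
    obtain ⟨g, hg, hg'⟩ := hx
    refine ⟨φ x⁻¹ g⁻¹, ?_, ?_⟩
    · have := act_inv_of hg
      rw [map_mul, map_mul, map_inv (φ x⁻¹) g] at this
      rw [map_inv (φ x⁻¹) g, eq_mul_inv_iff_mul_eq, eq_inv_mul_iff_mul_eq, ← mul_assoc]
      rw [mul_inv_eq_iff_eq_mul] at this
      rw [this]; group
    · rw [kill_bU ha hK (inv_mem hx'), map_inv, map_inv, hg', MulOpposite.op_inv]

theorem bU_faithful (ha : ArtinAct s N φ) {K : ℕ} (hK : K < N) {u : G} (hu : u ∈ bU s K)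
    (h1 : φ u = 1) : u = 1 := by
  obtain ⟨g, hg, hg'⟩ := bU_push ha hK hu
  rw [h1, MulAut.one_apply, eq_mul_inv_iff_mul_eq] at hg
  have : Commute g (of (K + 1)) := hg.symm
  rw [kill_eq_one_of_commute this, map_one] at hg'
  exact (MulOpposite.op_injective (by simpa using hg'.symm))

/-- counting homomorphism -/
def cnt (k : ℕ) : FreeGroup ℕ →* Multiplicative ℤ :=
  FreeGroup.lift (fun i => if i = k then Multiplicative.ofAdd 1 else 1)

theorem bC_act (ha : ArtinAct s N φ) {K : ℕ} (hK : K < N) {i : ℕ} (hi : i ≤ K) :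
    φ (bC s K i) (of (K + 1)) = of K := by
  induction hi using Nat.decreasingInduction with
  | self => rw [bC_le s le_rfl, bC_last, one_mul, ha.act1 K hK]
  | of_succ i hi ih =>
    rw [bC_le s (by omega), map_mul, MulAut.mul_apply, ha.act2 i (by omega) _ (by omega) (by omega),
      ih]

theorem bH_stable (ha : ArtinAct s N φ) {K : ℕ} (hK : K < N) {h : G} (hh : h ∈ bH s K) :
    ∀ f, kill (K + 1) (φ h f) = φ h (kill (K + 1) f) := by
  induction hh using Subgroup.closure_induction with
  | mem x hx => obtain ⟨j, hj, rfl⟩ := hx; exact act_kill_comm ha hK hj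
  | one => simp
  | mul x y _ _ hx hy => intro f; rw [map_mul, MulAut.mul_apply, hx, hy, MulAut.mul_apply]
  | inv x _ hx =>
    intro f
    refine (act_inv_of ?_).symm
    rw [← hx, ← MulAut.mul_apply, ← map_mul]; simp

theorem faithful (hs : BraidSeq s N) (ha : ArtinAct s N φ) (K : ℕ) (hK : K ≤ N) :
    ∀ g ∈ bH s K, φ g = 1 → g = 1 := by
  induction K with
  | zero =>
    intro g hg _
    have : bH s 0 = ⊥ := by simp [bH]
    rw [this] at hg
    exact Subgroup.mem_bot.mp hg
  | succ K ih =>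
    intro g hg h1
    have hKN : K < N := hK
    obtain ⟨i, hi, d, ⟨u, hu, h, hh, rfl⟩, rfl⟩ := bH_succ hs hKN hg
    have hfix : φ h (of (K + 1)) = of (K + 1) := bH_fix ha hKN.le hh (by omega)
    obtain ⟨a, hga, -⟩ := bU_push ha hKN hu
    rcases Nat.eq_or_lt_of_le hi with rfl | hlt
    · rw [bC_last, mul_one] at h1 ⊢
      have hall : φ h = 1 := by
        apply MulEquiv.ext
        intro x
        refine hom_ext_of (f := (φ h).toMonoidHom) (g := MonoidHom.id _) ?_ x
        intro t
        show φ h (of t) = of t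
        by_cases ht : K < t
        · exact bH_fix ha hKN.le hh ht
        · have e : φ u (φ h (of t)) = of t := by
            rw [← MulAut.mul_apply, ← map_mul, h1, MulAut.one_apply]
          have e2 := congrArg (kill (K + 1)) e
          rw [kill_bU ha hKN hu, bH_stable ha hKN hh, kill_ne (by omega)] at e2
          exact e2
      have hh1 := ih hKN.le h hh hall
      subst hh1
      rw [mul_one] at h1 ⊢
      exact bU_faithful ha hKN hu h1
    · exfalso
      have e : φ (u * h * bC s K i) (of (K + 1)) = of (K + 1) := by rw [h1, MulAut.one_apply]
      rw [map_mul, MulAut.mul_apply, bC_act ha hKN (by omega)] at e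
      have e2 : φ (u * h) (of (K + 1)) = a * of (K + 1) * a⁻¹ := by
        rw [map_mul, MulAut.mul_apply, hfix, hga]
      -- `of K` and a conjugate of `of (K+1)` coincide
      have e3 := act_inv_of e
      have e4 := act_inv_of e2
      rw [map_mul, map_mul, e3, map_inv] at e4
      have e5 := congrArg (cnt (K + 1)) e4
      simp [cnt] at e5
      exact absurd (congrArg Multiplicative.toAdd e5) (by simp)


/-! ### Roots of filtered unipotent maps -/

section Filt

variable {V : Type*} [AddCommGroup V] [Module ℚ V]

theorem filt_roots (W : ℕ → Submodule ℚ V) (hW : ∀ j, W (j + 1) ≤ W j)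
    (Φ Ψ : V →ₗ[ℚ] V) (hΦ : ∀ j, 1 ≤ j → ∀ x ∈ W j, Φ x - x ∈ W (j + 1))
    (hΨ : ∀ j, 1 ≤ j → ∀ x ∈ W j, Ψ x - x ∈ W (j + 1)) (m : ℕ) (hm : 0 < m)
    (h : Φ ^ m = Ψ ^ m) (k : ℕ) : ∀ j, 1 ≤ j → ∀ x ∈ W j, Φ x - Ψ x ∈ W (j + k) := by
  have hΦm : ∀ j, 1 ≤ j → ∀ x ∈ W j, Φ x ∈ W j := by
    intro j hj x hx
    have := add_mem (hW j (hΦ j hj x hx)) hx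
    simpa using this
  have hΨm : ∀ j, 1 ≤ j → ∀ x ∈ W j, Ψ x ∈ W j := by
    intro j hj x hx
    have := add_mem (hW j (hΨ j hj x hx)) hx
    simpa using this
  have hΨpow : ∀ p : ℕ, ∀ j, 1 ≤ j → ∀ x ∈ W j, (Ψ ^ p) x - x ∈ W (j + 1) := by
    intro p
    induction p with
    | zero => intro j hj x hx; simp
    | succ p ih =>
      intro j hj x hx
      have h1 := ih j hj (Ψ x) (hΨm j hj x hx)
      have h2 := add_mem h1 (hΨ j hj x hx)
      rw [pow_succ, Module.End.mul_apply]
      simpa using h2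
  induction k with
  | zero =>
    intro j hj x hx
    exact sub_mem (hΦm j hj x hx) (hΨm j hj x hx)
  | succ k ih =>
    have claim : ∀ p : ℕ, ∀ j, 1 ≤ j → ∀ x ∈ W j,
        (Φ ^ p) x - (Ψ ^ p) x - (p : ℚ) • (Φ x - Ψ x) ∈ W (j + k + 1) := by
      intro p
      induction p with
      | zero => intro j hj x hx; simp
      | succ p ihp =>
        intro j hj x hx
        have h1 := ihp j hj (Φ x) (hΦm j hj x hx)
        have h2 := Submodule.smul_mem _ (p : ℚ) (ih (j + 1) (by omega) _ (hΦ j hj x hx))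
        have h3 := hΨpow p (j + k) (by omega) _ (ih j hj x hx)
        rw [show j + 1 + k = j + k + 1 by omega] at h2
        have h4 := add_mem (add_mem h1 h2) h3
        convert h4 using 1
        rw [pow_succ, pow_succ, Module.End.mul_apply, Module.End.mul_apply]
        simp only [map_sub]
        push_cast
        module
    intro j hj x hx
    have h1 := claim m j hj x hx
    rw [h, sub_self, zero_sub] at h1
    have h2 := Submodule.smul_mem _ (m : ℚ)⁻¹ (neg_mem h1)
    rw [neg_neg, smul_smul, inv_mul_cancel₀ (by positivity), one_smul] at h2
    exact h2

end Filt

section Magnus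

variable {F : Type*} [Group F]

/-- group element in the group algebra -/
noncomputable abbrev ga (g : F) : MonoidAlgebra ℚ F := MonoidAlgebra.of ℚ F g

/-- The augmentation ideal as a subspace. -/
noncomputable def augI (F : Type*) [Group F] : Submodule ℚ (MonoidAlgebra ℚ F) :=
  Submodule.span ℚ {x | ∃ g : F, x = ga g - 1}

theorem ga_one : ga (1 : F) = 1 := map_one (MonoidAlgebra.of ℚ F)

theorem ga_sub_mem (g : F) : ga g - 1 ∈ augI F := Submodule.subset_span ⟨g, rfl⟩

theorem augI_mul_le : augI F * augI F ≤ augI F := by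
  rw [augI, Submodule.span_mul_span, Submodule.span_le]
  rintro _ ⟨_, ⟨g, rfl⟩, _, ⟨h, rfl⟩, rfl⟩
  have : (ga g - 1) * (ga h - 1) = (ga (g * h) - 1) - (ga g - 1) - (ga h - 1) := by
    simp only [ga, map_mul]; noncomm_ring
  show (ga g - 1) * (ga h - 1) ∈ augI F
  rw [this]
  exact sub_mem (sub_mem (ga_sub_mem _) (ga_sub_mem _)) (ga_sub_mem _)

/-- filtration -/
noncomputable def filW (F : Type*) [Group F] (j : ℕ) : Submodule ℚ (MonoidAlgebra ℚ F) :=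
  if j = 0 then ⊤ else augI F ^ j

theorem filW_succ_le (j : ℕ) : filW F (j + 1) ≤ filW F j := by
  rcases j with _ | j
  · simp [filW]
  · simp only [filW, if_neg (Nat.succ_ne_zero _)]
    rw [pow_succ, pow_succ, mul_assoc]
    exact mul_le_mul' le_rfl augI_mul_le

theorem filW_pos {j : ℕ} (hj : 1 ≤ j) : filW F j = augI F ^ j := if_neg (by omega)

/-- the induced algebra map -/
noncomputable def indMap (f : F →* F) : MonoidAlgebra ℚ F →ₐ[ℚ] MonoidAlgebra ℚ F :=
  MonoidAlgebra.lift ℚ _ F ((MonoidAlgebra.of ℚ F).comp f)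

theorem indMap_ga (f : F →* F) (g : F) : indMap f (ga g) = ga (f g) := by
  simp only [indMap, ga, MonoidAlgebra.lift_of]; rfl

theorem ind_unip (f : F →* F) (hf : ∀ g, ga (f g) - ga g ∈ augI F ^ 2) (j : ℕ) (hj : 1 ≤ j) :
    ∀ x ∈ filW F j, indMap f x - x ∈ filW F (j + 1) := by
  rw [filW_pos hj, filW_pos (by omega)]
  have base : ∀ x ∈ augI F, indMap f x - x ∈ augI F ^ 2 := by
    intro x hx
    induction hx using Submodule.span_induction with
    | mem x hx =>
      obtain ⟨g, rfl⟩ := hx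
      rw [map_sub, indMap_ga, map_one]
      simpa using hf g
    | zero => simp
    | add x y _ _ hx hy => rw [map_add, add_sub_add_comm]; exact add_mem hx hy
    | smul a x _ hx => rw [map_smul, ← smul_sub]; exact Submodule.smul_mem _ _ hx
  have stab : ∀ x ∈ augI F, indMap f x ∈ augI F := by
    intro x hx
    have h1 := base x hx
    rw [pow_two] at h1
    simpa using add_mem (augI_mul_le h1) hx
  induction j, hj using Nat.le_induction with
  | base => simpa using base
  | succ j hj ih =>
    intro x hx
    rw [pow_succ] at hx
    induction hx using Submodule.mul_induction_on' with
    | mem_mul_mem a ha b hb =>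
      have e : indMap f (a * b) - a * b =
          (indMap f a - a) * indMap f b + a * (indMap f b - b) := by
        rw [map_mul]; noncomm_ring
      rw [e]
      refine add_mem ?_ ?_
      · rw [pow_succ]
        exact Submodule.mul_mem_mul (ih a ha) (stab b hb)
      · rw [show j + 1 + 1 = j + 2 by omega, pow_add]
        exact Submodule.mul_mem_mul ha (base b hb)
    | add x _ y _ hx hy => rw [map_add, add_sub_add_comm]; exact add_mem hx hy

/-- `IA` criterion on products -/
theorem ia_mul {a b a' b' : F} (h1 : ga a' - ga a ∈ augI F ^ 2) (h2 : ga b' - ga b ∈ augI F ^ 2) :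
    ga (a' * b') - ga (a * b) ∈ augI F ^ 2 := by
  have h3 : augI F ^ 2 * augI F ≤ augI F ^ 2 := by
    rw [pow_two, mul_assoc]; exact mul_le_mul' le_rfl augI_mul_le
  have h4 : augI F * augI F ^ 2 ≤ augI F ^ 2 := by
    rw [pow_two, ← mul_assoc]; exact mul_le_mul' augI_mul_le le_rfl
  have e : ga (a' * b') - ga (a * b) = (ga a' - ga a) + (ga a' - ga a) * (ga b' - 1)
      + (ga b' - ga b) + (ga a - 1) * (ga b' - ga b) := by
    simp only [ga, map_mul]; noncomm_ring
  rw [e]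
  exact add_mem (add_mem (add_mem h1 (h3 (Submodule.mul_mem_mul h1 (ga_sub_mem _)))) h2)
    (h4 (Submodule.mul_mem_mul (ga_sub_mem _) h2))

theorem ia_conj (w x : F) : ga (w * x * w⁻¹) - ga x ∈ augI F ^ 2 := by
  have h3 : augI F ^ 2 * augI F ≤ augI F ^ 2 := by
    rw [pow_two, mul_assoc]; exact mul_le_mul' le_rfl augI_mul_le
  have e1 : ga w * ga w⁻¹ = 1 := by simp only [ga]; rw [← map_mul, mul_inv_cancel, map_one]
  set y := (ga w - 1) * (ga x - 1) - (ga x - 1) * (ga w - 1) with hy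
  have hym : y ∈ augI F ^ 2 := by
    rw [pow_two]
    exact sub_mem (Submodule.mul_mem_mul (ga_sub_mem _) (ga_sub_mem _))
      (Submodule.mul_mem_mul (ga_sub_mem _) (ga_sub_mem _))
  have e : ga (w * x * w⁻¹) - ga x = y + y * (ga w⁻¹ - 1) := by
    have e2 : y = ga w * ga x - ga x * ga w := by rw [hy]; noncomm_ring
    have e3 : y + y * (ga w⁻¹ - 1) = ga w * ga x * ga w⁻¹ - ga x * (ga w * ga w⁻¹) := by
      rw [e2]; noncomm_ring
    rw [e3, e1, mul_one]
    simp only [ga, map_mul]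
  rw [e]
  exact add_mem hym (h3 (Submodule.mul_mem_mul hym (ga_sub_mem _)))

theorem ia_inv {a a' : F} (h1 : ga a' - ga a ∈ augI F ^ 2) :
    ga a'⁻¹ - ga a⁻¹ ∈ augI F ^ 2 := by
  have h3 : augI F ^ 2 * augI F ≤ augI F ^ 2 := by
    rw [pow_two, mul_assoc]; exact mul_le_mul' le_rfl augI_mul_le
  have h4 : augI F * augI F ^ 2 ≤ augI F ^ 2 := by
    rw [pow_two, ← mul_assoc]; exact mul_le_mul' augI_mul_le le_rfl
  have e1 : ga a * ga a⁻¹ = 1 := by simp only [ga]; rw [← map_mul, mul_inv_cancel, map_one]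
  have e2 : ga a'⁻¹ * ga a' = 1 := by simp only [ga]; rw [← map_mul, inv_mul_cancel, map_one]
  set y := ga a' - ga a with hy
  set z := y + (ga a'⁻¹ - 1) * y with hz
  have hzm : z ∈ augI F ^ 2 := add_mem h1 (h4 (Submodule.mul_mem_mul (ga_sub_mem _) h1))
  have e : ga a'⁻¹ - ga a⁻¹ = - (z + z * (ga a⁻¹ - 1)) := by
    have e3 : z = 1 - ga a'⁻¹ * ga a := by
      have : z = ga a'⁻¹ * ga a' - ga a'⁻¹ * ga a := by rw [hz, hy]; noncomm_ring
      rw [this, e2]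
    have e4 : z + z * (ga a⁻¹ - 1) = ga a⁻¹ - ga a'⁻¹ * (ga a * ga a⁻¹) := by
      rw [e3]; noncomm_ring
    rw [e4, e1]; simp
  rw [e]
  exact neg_mem (add_mem hzm (h3 (Submodule.mul_mem_mul hzm (ga_sub_mem _))))

end Magnus

section MagnusRep

open FreeGroup (of)

variable {α : Type*} [DecidableEq α]

/-- The nilpotent shift attached to a letter `x` and a list of syllables. -/
def nil (l : List (α × ℤ)) (x : α) : Module.End ℚ (ℕ → ℚ) where
  toFun v t := if (l[t]?).map Prod.fst = some x then v (t + 1) else 0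
  map_add' v w := by ext t; simp only [Pi.add_apply]; split_ifs <;> simp
  map_smul' c v := by ext t; simp only [Pi.smul_apply]; split_ifs <;> simp

theorem nil_apply (l : List (α × ℤ)) (x : α) (v : ℕ → ℚ) (t : ℕ) :
    nil l x v t = if (l[t]?).map Prod.fst = some x then v (t + 1) else 0 := rfl

theorem nil_sq {l : List (α × ℤ)} (hl : l.IsChain (fun a b => a.1 ≠ b.1)) (x : α) :
    nil l x * nil l x = 0 := by
  ext v t
  simp only [Module.End.mul_apply, nil_apply, LinearMap.zero_apply, Pi.zero_apply]
  split_ifs with h1 h2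
  · exfalso
    rw [Option.map_eq_some_iff] at h1 h2
    obtain ⟨a, ha, hax⟩ := h1
    obtain ⟨b, hb, hbx⟩ := h2
    obtain ⟨ht1, rfl⟩ := List.getElem?_eq_some_iff.mp ha
    obtain ⟨ht2, rfl⟩ := List.getElem?_eq_some_iff.mp hb
    have := List.isChain_iff_getElem.mp hl t ht2
    exact this (hax.trans hbx.symm)
  · rfl
  · rfl

/-- The unit `1 + N`. -/
def nilUnit {l : List (α × ℤ)} (hl : l.IsChain (fun a b => a.1 ≠ b.1)) (x : α) :
    (Module.End ℚ (ℕ → ℚ))ˣ where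
  val := 1 + nil l x
  inv := 1 - nil l x
  val_inv := by
    have := nil_sq hl x
    rw [add_mul, one_mul, mul_sub, mul_one, this]; abel
  inv_val := by
    have := nil_sq hl x
    rw [sub_mul, one_mul, mul_add, mul_one, this]; abel

theorem nilUnit_zpow {l : List (α × ℤ)} (hl : l.IsChain (fun a b => a.1 ≠ b.1)) (x : α) (e : ℤ) :
    ((nilUnit hl x ^ e : (Module.End ℚ (ℕ → ℚ))ˣ) : Module.End ℚ (ℕ → ℚ)) =
      1 + (e : ℚ) • nil l x := by
  have hsq := nil_sq hl x
  have hv : ((nilUnit hl x : (Module.End ℚ (ℕ → ℚ))ˣ) : Module.End ℚ (ℕ → ℚ)) = 1 + nil l x := rfl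
  have hi : (((nilUnit hl x)⁻¹ : (Module.End ℚ (ℕ → ℚ))ˣ) : Module.End ℚ (ℕ → ℚ)) = 1 - nil l x :=
    rfl
  induction e using Int.induction_on with
  | zero => simp
  | succ i ih =>
    rw [zpow_add_one, Units.val_mul, ih, hv, add_mul, one_mul, smul_mul_assoc, mul_add, mul_one,
      hsq, add_zero]
    push_cast
    module
  | pred i ih =>
    rw [zpow_sub_one, Units.val_mul, ih, hi, add_mul, one_mul, smul_mul_assoc, mul_sub, mul_one,
      hsq, sub_zero]
    push_cast
    module

/-- Magnus type representation -/
def mag {l : List (α × ℤ)} (hl : l.IsChain (fun a b => a.1 ≠ b.1)) :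
    FreeGroup α →* (Module.End ℚ (ℕ → ℚ))ˣ := FreeGroup.lift (nilUnit hl)

/-- product of syllables -/
def syl (l : List (α × ℤ)) : FreeGroup α := (l.map (fun p => of p.1 ^ p.2)).prod

theorem exists_syl (w : FreeGroup α) : ∃ l : List (α × ℤ),
    l.IsChain (fun a b => a.1 ≠ b.1) ∧ (∀ p ∈ l, p.2 ≠ 0) ∧ syl l = w := by
  have step : ∀ (a : α) (e : ℤ) (w : FreeGroup α), (∃ l : List (α × ℤ),
      l.IsChain (fun a b => a.1 ≠ b.1) ∧ (∀ p ∈ l, p.2 ≠ 0) ∧ syl l = w) →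
      ∃ l : List (α × ℤ), l.IsChain (fun a b => a.1 ≠ b.1) ∧ (∀ p ∈ l, p.2 ≠ 0) ∧
        syl l = of a ^ e * w := by
    rintro a e w ⟨l, hl, hne, rfl⟩
    by_cases he : e = 0
    · subst he; exact ⟨l, hl, hne, by simp⟩
    rcases l with _ | ⟨⟨b, f⟩, l⟩
    · exact ⟨[(a, e)], by simp, by simpa using he, by simp [syl]⟩
    by_cases hab : a = b
    · subst hab
      by_cases hef : e + f = 0
      · refine ⟨l, ?_, fun p hp => hne p (List.mem_cons_of_mem _ hp), ?_⟩
        · exact hl.tail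
        · simp only [syl, List.map_cons, List.prod_cons]
          rw [← mul_assoc, ← zpow_add, hef]; simp
      · refine ⟨(a, e + f) :: l, ?_, ?_, ?_⟩
        · rw [List.isChain_cons] at hl ⊢; exact hl
        · intro p hp
          rcases List.mem_cons.mp hp with rfl | hp
          · exact hef
          · exact hne p (List.mem_cons_of_mem _ hp)
        · simp only [syl, List.map_cons, List.prod_cons]
          rw [← mul_assoc, ← zpow_add]
    · refine ⟨(a, e) :: (b, f) :: l, ?_, ?_, ?_⟩
      · rw [List.isChain_cons_cons]; exact ⟨hab, hl⟩
      · intro p hp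
        rcases List.mem_cons.mp hp with rfl | hp
        · exact he
        · exact hne p hp
      · simp [syl]
  obtain ⟨L, rfl⟩ : ∃ L, FreeGroup.mk L = w := ⟨w.toWord, FreeGroup.mk_toWord⟩
  induction L with
  | nil => exact ⟨[], by simp, by simp, by simp [syl]; rfl⟩
  | cons p L ih =>
    obtain ⟨a, b⟩ := p
    have e : FreeGroup.mk ((a, b) :: L) = of a ^ (if b then (1 : ℤ) else -1) * FreeGroup.mk L := by
      cases b <;> simp [of, FreeGroup.inv_mk, FreeGroup.mul_mk, FreeGroup.invRev]
    rw [e]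
    exact step _ _ _ ih

theorem mag_of_zpow {l : List (α × ℤ)} (hl : l.IsChain (fun a b => a.1 ≠ b.1)) (x : α) (e : ℤ) :
    ((mag hl (of x ^ e) : (Module.End ℚ (ℕ → ℚ))ˣ) : Module.End ℚ (ℕ → ℚ)) =
      1 + (e : ℚ) • nil l x := by
  rw [map_zpow, mag, FreeGroup.lift_apply_of, nilUnit_zpow]

theorem mag_syl {l : List (α × ℤ)} (hl : l.IsChain (fun a b => a.1 ≠ b.1))
    (hne : ∀ p ∈ l, p.2 ≠ 0) (t : ℕ) (ht : t ≤ l.length) :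
    (∀ i < t, (mag hl (syl (l.drop t)) : Module.End ℚ (ℕ → ℚ)) (Pi.single l.length 1) i = 0) ∧
    (mag hl (syl (l.drop t)) : Module.End ℚ (ℕ → ℚ)) (Pi.single l.length 1) t ≠ 0 := by
  induction ht using Nat.decreasingInduction with
  | self =>
    simp only [List.drop_length, syl, List.map_nil, List.prod_nil, map_one, Units.val_one,
      Module.End.one_apply, Pi.single_eq_same]
    refine ⟨fun i hi => ?_, one_ne_zero⟩
    rw [Pi.single_apply, if_neg (by omega)]
  | of_succ t ht ih =>
    have hlt : t < l.length := by omega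
    obtain ⟨ih1, ih2⟩ := ih
    have e : syl (l.drop t) = of l[t].1 ^ l[t].2 * syl (l.drop (t + 1)) := by
      rw [List.drop_eq_getElem_cons hlt]
      simp only [syl, List.map_cons, List.prod_cons]
    rw [e, map_mul, Units.val_mul, mag_of_zpow]
    generalize (mag hl (syl (l.drop (t + 1))) : Module.End ℚ (ℕ → ℚ)) = u at *
    generalize hv : u (Pi.single l.length 1) = v at *
    have ap : ∀ i, ((1 + (l[t].2 : ℚ) • nil l l[t].1 : Module.End ℚ (ℕ → ℚ)) * u) (Pi.single l.length 1) i
        = v i + l[t].2 * (nil l l[t].1 v i) := by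
      intro i
      rw [Module.End.mul_apply, hv]
      simp
    constructor
    · intro i hi
      rw [ap, nil_apply, ih1 i (by omega), ih1 (i + 1) (by omega)]
      simp
    · rw [ap, nil_apply, ih1 t (by omega), if_pos (by simp [hlt]), zero_add]
      exact mul_ne_zero (by exact_mod_cast hne _ (List.getElem_mem hlt)) ih2

theorem mag_unip {l : List (α × ℤ)} (hl : l.IsChain (fun a b => a.1 ≠ b.1)) (g : FreeGroup α) :
    ∀ (d : ℕ) (v : ℕ → ℚ), (∀ t, d < t → t ≤ l.length → v t = 0) → ∀ t, d ≤ t → t ≤ l.length →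
      (mag hl g : Module.End ℚ (ℕ → ℚ)) v t = v t := by
  have base : ∀ (x : α) (e : ℤ) (d : ℕ) (v : ℕ → ℚ), (∀ t, d < t → t ≤ l.length → v t = 0) →
      ∀ t, d ≤ t → t ≤ l.length →
      (mag hl (of x ^ e) : Module.End ℚ (ℕ → ℚ)) v t = v t := by
    intro x e d v hv t hdt ht
    rw [mag_of_zpow]
    have : nil l x v t = 0 := by
      rw [nil_apply]
      split_ifs with h
      · rw [Option.map_eq_some_iff] at h
        obtain ⟨a, ha, -⟩ := h
        obtain ⟨ht1, -⟩ := List.getElem?_eq_some_iff.mp ha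
        exact hv _ (by omega) (by omega)
      · rfl
    simp [this]
  induction g using FreeGroup.induction_on with
  | C1 => simp
  | of x => simpa using base x 1
  | inv_of x _ => simpa using base x (-1)
  | mul x y hx hy =>
    intro d v hv t hdt ht
    rw [map_mul, Units.val_mul, Module.End.mul_apply, hx d, hy d v hv t hdt ht]
    · intro t hdt ht
      rw [hy d v hv t hdt.le ht, hv t hdt ht]
    · exact hdt
    · exact ht

/-- linear extension of `mag` -/
noncomputable def magL {l : List (α × ℤ)} (hl : l.IsChain (fun a b => a.1 ≠ b.1)) :
    MonoidAlgebra ℚ (FreeGroup α) →ₐ[ℚ] Module.End ℚ (ℕ → ℚ) :=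
  MonoidAlgebra.lift ℚ _ _ ((Units.coeHom _).comp (mag hl))

theorem magL_ga {l : List (α × ℤ)} (hl : l.IsChain (fun a b => a.1 ≠ b.1)) (g : FreeGroup α) :
    magL hl (ga g) = (mag hl g : Module.End ℚ (ℕ → ℚ)) := by
  simp only [magL, ga, MonoidAlgebra.lift_of]; rfl

theorem magL_augI {l : List (α × ℤ)} (hl : l.IsChain (fun a b => a.1 ≠ b.1))
    (a : MonoidAlgebra ℚ (FreeGroup α)) (ha : a ∈ augI (FreeGroup α)) :
    ∀ (d : ℕ) (v : ℕ → ℚ), (∀ t, d < t → t ≤ l.length → v t = 0) → ∀ t, d ≤ t → t ≤ l.length →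
      magL hl a v t = 0 := by
  intro d v hv t hdt ht
  induction ha using Submodule.span_induction with
  | mem x hx =>
    obtain ⟨g, rfl⟩ := hx
    rw [map_sub, magL_ga, map_one, LinearMap.sub_apply, Pi.sub_apply, mag_unip hl g d v hv t hdt ht]
    simp
  | zero => simp
  | add x y _ _ hx hy => rw [map_add, LinearMap.add_apply, Pi.add_apply, hx, hy, add_zero]
  | smul c x _ hx => rw [map_smul, LinearMap.smul_apply, Pi.smul_apply, hx, smul_zero]

theorem magL_pow {l : List (α × ℤ)} (hl : l.IsChain (fun a b => a.1 ≠ b.1)) (k : ℕ) :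
    ∀ a ∈ augI (FreeGroup α) ^ k, ∀ (v : ℕ → ℚ) (t : ℕ), t ≤ l.length → l.length < t + k →
      magL hl a v t = 0 := by
  induction k with
  | zero => intro a _ v t h1 h2; omega
  | succ k ih =>
    intro a ha v t h1 h2
    rw [pow_succ'] at ha
    induction ha using Submodule.mul_induction_on' with
    | mem_mul_mem a ha b hb =>
      rw [map_mul, Module.End.mul_apply]
      refine magL_augI hl a ha (l.length - k) _ ?_ t (by omega) h1
      intro t ht ht'
      exact ih b hb v t ht' (by omega)
    | add x _ y _ hx hy => rw [map_add, LinearMap.add_apply, Pi.add_apply, hx, hy, add_zero]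

theorem separated {a b : FreeGroup α} (h : ∀ k, 1 ≤ k → ga a - ga b ∈ augI (FreeGroup α) ^ k) :
    a = b := by
  obtain ⟨l, hl, hne, hw⟩ := exists_syl (a * b⁻¹)
  by_cases hr : l.length = 0
  · rw [List.length_eq_zero_iff] at hr
    subst hr
    simp only [syl, List.map_nil, List.prod_nil] at hw
    exact (mul_inv_eq_one.mp hw.symm)
  exfalso
  have h1 := (mag_syl hl hne 0 (Nat.zero_le _)).2
  rw [List.drop_zero, hw] at h1
  apply h1
  have h2 := magL_pow hl (l.length + 1) _ (h _ (by omega))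
    ((mag hl b⁻¹ : Module.End ℚ (ℕ → ℚ)) (Pi.single l.length 1)) 0 (by omega) (by omega)
  rw [map_sub, magL_ga, magL_ga, LinearMap.sub_apply, Pi.sub_apply, sub_eq_zero,
    ← Module.End.mul_apply, ← Module.End.mul_apply, ← Units.val_mul, ← Units.val_mul,
    ← map_mul, ← map_mul] at h2
  rw [h2, mul_inv_cancel, map_one, Units.val_one, Module.End.one_apply, Pi.single_apply,
    if_neg (by omega)]

theorem lin_ext {F : Type*} [Group F] {Φ Ψ : MonoidAlgebra ℚ F →ₗ[ℚ] MonoidAlgebra ℚ F}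
    (h : ∀ x, Φ (ga x) = Ψ (ga x)) : Φ = Ψ := by
  apply LinearMap.ext
  intro y
  induction y using MonoidAlgebra.induction_on with
  | of x => exact h x
  | add x y hx hy => rw [map_add, map_add, hx, hy]
  | smul c x hx => rw [map_smul, map_smul, hx]

theorem ind_exists {F : Type*} [Group F] (f : MulAut F)
    (hf : ∀ x, ga (f x) - ga x ∈ augI F ^ 2) :
    ∃ Φ : MonoidAlgebra ℚ F →ₗ[ℚ] MonoidAlgebra ℚ F, (∀ x, Φ (ga x) = ga (f x)) ∧
      ∀ j, 1 ≤ j → ∀ x ∈ filW F j, Φ x - x ∈ filW F (j + 1) :=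
  ⟨(indMap f.toMonoidHom).toLinearMap, fun x => indMap_ga f.toMonoidHom x,
    fun j hj x hx => ind_unip f.toMonoidHom hf j hj x hx⟩

theorem pow_ga {F : Type*} [Group F] (f : MulAut F)
    (Φ : MonoidAlgebra ℚ F →ₗ[ℚ] MonoidAlgebra ℚ F) (h : ∀ x, Φ (ga x) = ga (f x)) (m : ℕ) :
    ∀ x, (Φ ^ m) (ga x) = ga ((f ^ m) x) := by
  induction m with
  | zero => intro x; simp
  | succ m ih => intro x; rw [pow_succ, Module.End.mul_apply, h, ih, pow_succ, MulAut.mul_apply]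

/-- Roots are unique among `IA` automorphisms of a free group. -/
theorem ia_roots (f g : MulAut (FreeGroup α))
    (hf : ∀ x, ga (f x) - ga x ∈ augI (FreeGroup α) ^ 2)
    (hg : ∀ x, ga (g x) - ga x ∈ augI (FreeGroup α) ^ 2) (m : ℕ) (hm : 0 < m)
    (h : f ^ m = g ^ m) : f = g := by
  obtain ⟨Φ, hΦ1, hΦ2⟩ := ind_exists f hf
  obtain ⟨Ψ, hΨ1, hΨ2⟩ := ind_exists g hg
  have hpow : Φ ^ m = Ψ ^ m := by
    apply lin_ext
    intro x
    rw [pow_ga f Φ hΦ1, pow_ga g Ψ hΨ1, h]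
  apply MulEquiv.ext
  intro x
  apply separated
  intro k hk
  have h0 : ga x - 1 ∈ filW (FreeGroup α) 1 := by
    rw [filW_pos le_rfl, pow_one]; exact ga_sub_mem x
  have := filt_roots (filW (FreeGroup α)) filW_succ_le Φ Ψ hΦ2 hΨ2 m hm hpow (k - 1) 1 le_rfl _ h0
  rw [show 1 + (k - 1) = k by omega, filW_pos hk] at this
  have h1 : Φ 1 = 1 := by have := hΦ1 1; rwa [map_one f, ga_one] at this
  have h2 : Ψ 1 = 1 := by have := hΨ1 1; rwa [map_one g, ga_one] at this
  rw [map_sub, map_sub, hΦ1, hΨ1, h1, h2, sub_sub_sub_cancel_right] at this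
  exact this

end MagnusRep

section Final

open FreeGroup (of)

/-- forward Artin map -/
def artF (j : ℕ) : FreeGroup ℕ →* FreeGroup ℕ :=
  FreeGroup.lift (fun i => if i = j then of j * of (j + 1) * (of j)⁻¹ else
    if i = j + 1 then of j else of i)

/-- backward Artin map -/
def artB (j : ℕ) : FreeGroup ℕ →* FreeGroup ℕ :=
  FreeGroup.lift (fun i => if i = j then of (j + 1) else
    if i = j + 1 then (of (j + 1))⁻¹ * of j * of (j + 1) else of i)

theorem artF_0 (j : ℕ) : artF j (of j) = of j * of (j + 1) * (of j)⁻¹ := by simp [artF]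
theorem artF_1 (j : ℕ) : artF j (of (j + 1)) = of j := by simp [artF]
theorem artF_2 {i j : ℕ} (h : i ≠ j) (h' : i ≠ j + 1) : artF j (of i) = of i := by
  simp [artF, h, h']
theorem artB_0 (j : ℕ) : artB j (of j) = of (j + 1) := by simp [artB]
theorem artB_1 (j : ℕ) : artB j (of (j + 1)) = (of (j + 1))⁻¹ * of j * of (j + 1) := by
  simp [artB]
theorem artB_2 {i j : ℕ} (h : i ≠ j) (h' : i ≠ j + 1) : artB j (of i) = of i := by
  simp [artB, h, h']

/-- Artin automorphism -/
def art (j : ℕ) : MulAut (FreeGroup ℕ) :=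
  MonoidHom.toMulEquiv (artF j) (artB j)
    (by
      apply FreeGroup.ext_hom
      intro i
      simp only [MonoidHom.comp_apply, MonoidHom.id_apply]
      by_cases h : i = j
      · subst h; simp only [artF_0, map_mul, map_inv, artB_0, artB_1]; group
      · by_cases h' : i = j + 1
        · subst h'; simp only [artF_1, artB_0]
        · rw [artF_2 h h', artB_2 h h'])
    (by
      apply FreeGroup.ext_hom
      intro i
      simp only [MonoidHom.comp_apply, MonoidHom.id_apply]
      by_cases h : i = j
      · subst h; simp only [artB_0, artF_1]
      · by_cases h' : i = j + 1
        · subst h'; simp only [artB_1, map_mul, map_inv, artF_0, artF_1]; group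
        · rw [artB_2 h h', artF_2 h h'])

theorem art_apply (j : ℕ) (x : FreeGroup ℕ) : art j x = artF j x := rfl

theorem mulAut_ext {f g : MulAut (FreeGroup ℕ)} (h : ∀ i, f (of i) = g (of i)) : f = g := by
  apply MulEquiv.ext
  intro x
  exact hom_ext_of (f := f.toMonoidHom) (g := g.toMonoidHom) h x

theorem art_comm {i j : ℕ} (h : i + 2 ≤ j) : art i * art j = art j * art i := by
  apply mulAut_ext
  intro t
  simp only [MulAut.mul_apply, art_apply]
  have hj : artF i (of j) = of j := artF_2 (by omega) (by omega)
  have hj1 : artF i (of (j + 1)) = of (j + 1) := artF_2 (by omega) (by omega)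
  have hi : artF j (of i) = of i := artF_2 (by omega) (by omega)
  have hi1 : artF j (of (i + 1)) = of (i + 1) := artF_2 (by omega) (by omega)
  by_cases h1 : t = i
  · subst h1; simp only [artF_0, map_mul, map_inv, hi, hi1]
  by_cases h2 : t = i + 1
  · subst h2; simp only [artF_1, hi, hi1]
  rw [artF_2 h1 h2]
  by_cases h3 : t = j
  · subst h3; simp only [artF_0, map_mul, map_inv, hj, hj1]
  by_cases h4 : t = j + 1
  · subst h4; simp only [artF_1, hj]
  rw [artF_2 h3 h4, artF_2 h1 h2]

theorem art_braid (i : ℕ) :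
    art i * art (i + 1) * art i = art (i + 1) * art i * art (i + 1) := by
  apply mulAut_ext
  intro t
  simp only [MulAut.mul_apply, art_apply]
  have hi : artF (i + 1) (of i) = of i := artF_2 (by omega) (by omega)
  have hi2 : artF i (of (i + 1 + 1)) = of (i + 1 + 1) := artF_2 (by omega) (by omega)
  by_cases h1 : t = i
  · subst h1; simp only [artF_0, artF_1, map_mul, map_inv, hi, hi2]; group
  by_cases h2 : t = i + 1
  · subst h2; simp only [artF_0, artF_1, map_mul, map_inv, hi, hi2]
  by_cases h3 : t = i + 1 + 1
  · subst h3; simp only [artF_1, hi, hi2]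
  rw [artF_2 h1 h2, artF_2 h2 h3, artF_2 h1 h2, artF_2 h2 h3]

/-- Artin representation -/
def artHom (n : ℕ) : BraidGroup n →* MulAut (FreeGroup ℕ) :=
  PresentedGroup.toGroup (f := fun i : Fin (n - 1) => art i.val) (by
    rintro r (⟨i, j, hij, rfl⟩ | ⟨i, j, hij, rfl⟩)
    · simp only [map_mul, map_inv, FreeGroup.lift_apply_of]
      rw [mul_inv_eq_one]
      rcases hij with h | h
      · exact art_comm h
      · exact (art_comm h).symm
    · simp only [map_mul, map_inv, FreeGroup.lift_apply_of]
      rw [mul_inv_eq_one]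
      rcases hij with h | h
      · rw [← h]; exact art_braid _
      · rw [← h]; exact (art_braid _).symm)

/-- transposition on naturals -/
def tn (i t : ℕ) : ℕ := if t = i then i + 1 else if t = i + 1 then i else t

theorem tn_0 (i : ℕ) : tn i i = i + 1 := by simp [tn]
theorem tn_1 (i : ℕ) : tn i (i + 1) = i := by simp [tn]
theorem tn_2 {i t : ℕ} (h : t ≠ i) (h' : t ≠ i + 1) : tn i t = t := by simp [tn, h, h']

theorem tn_comm {i j : ℕ} (h : i + 2 ≤ j) (t : ℕ) : tn i (tn j t) = tn j (tn i t) := by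
  have hj : tn i j = j := tn_2 (by omega) (by omega)
  have hj1 : tn i (j + 1) = j + 1 := tn_2 (by omega) (by omega)
  have hi : tn j i = i := tn_2 (by omega) (by omega)
  have hi1 : tn j (i + 1) = i + 1 := tn_2 (by omega) (by omega)
  by_cases h1 : t = i
  · subst h1; simp only [tn_0, hi, hi1]
  by_cases h2 : t = i + 1
  · subst h2; simp only [tn_1, hi, hi1]
  rw [tn_2 h1 h2]
  by_cases h3 : t = j
  · subst h3; simp only [tn_0, hj1]
  by_cases h4 : t = j + 1
  · subst h4; simp only [tn_1, hj]
  rw [tn_2 h3 h4, tn_2 h1 h2]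

theorem tn_braid (i t : ℕ) :
    tn i (tn (i + 1) (tn i t)) = tn (i + 1) (tn i (tn (i + 1) t)) := by
  have hi : tn (i + 1) i = i := tn_2 (by omega) (by omega)
  have hi2 : tn i (i + 1 + 1) = i + 1 + 1 := tn_2 (by omega) (by omega)
  by_cases h1 : t = i
  · subst h1; simp only [tn_0, hi, hi2]
  by_cases h2 : t = i + 1
  · subst h2; simp only [tn_0, tn_1, hi, hi2]
  by_cases h3 : t = i + 1 + 1
  · subst h3; simp only [tn_1, hi, hi2]
  rw [tn_2 h1 h2, tn_2 h2 h3, tn_2 h1 h2, tn_2 h2 h3]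

/-- transposition -/
def tr (n : ℕ) (i : Fin (n - 1)) : Equiv.Perm (Fin n) :=
  Equiv.swap ⟨i.val, by omega⟩ ⟨i.val + 1, by omega⟩

theorem tr_apply (n : ℕ) (i : Fin (n - 1)) (t : Fin n) : (tr n i t).val = tn i.val t.val := by
  rw [tr, Equiv.swap_apply_def, tn]
  simp only [Fin.ext_iff]
  split_ifs <;> rfl

/-- permutation of a braid -/
def permHom (n : ℕ) : BraidGroup n →* Equiv.Perm (Fin n) :=
  PresentedGroup.toGroup (f := tr n) (by
    rintro r (⟨i, j, hij, rfl⟩ | ⟨i, j, hij, rfl⟩)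
    · simp only [map_mul, map_inv, FreeGroup.lift_apply_of]
      rw [mul_inv_eq_one]
      ext t
      simp only [Equiv.Perm.mul_apply, tr_apply]
      rcases hij with h | h
      · exact tn_comm h _
      · exact (tn_comm h _).symm
    · simp only [map_mul, map_inv, FreeGroup.lift_apply_of]
      rw [mul_inv_eq_one]
      ext t
      simp only [Equiv.Perm.mul_apply, tr_apply]
      rcases hij with h | h
      · rw [← h]; exact tn_braid _ _
      · rw [← h]; exact (tn_braid _ _).symm)

/-- 0-based generator sequence -/
def gs (n : ℕ) (i : ℕ) : BraidGroup n :=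
  if h : i < n - 1 then PresentedGroup.of ⟨i, h⟩ else 1

theorem gs_lt {n i : ℕ} (h : i < n - 1) :
    gs n i = (PresentedGroup.of ⟨i, h⟩ : BraidGroup n) := dif_pos h

theorem gs_seq (n : ℕ) : BraidSeq (gs n) (n - 1) where
  comm i j h := by
    by_cases hj : j < n - 1
    · rw [gs_lt (show i < n - 1 by omega), gs_lt hj]
      have := PresentedGroup.one_of_mem (rels := braidRels n)
        (x := of ⟨i, by omega⟩ * of ⟨j, hj⟩ * (of ⟨j, hj⟩ * of ⟨i, by omega⟩)⁻¹)
        (Or.inl ⟨_, _, Or.inl h, rfl⟩)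
      rw [map_mul, map_inv, mul_inv_eq_one, map_mul, map_mul] at this
      exact this
    · rw [gs, gs, dif_neg hj]; exact Commute.one_right _
  braid i h := by
    rw [gs_lt (show i < n - 1 by omega), gs_lt h]
    have := PresentedGroup.one_of_mem (rels := braidRels n)
      (x := of ⟨i, by omega⟩ * of ⟨i + 1, h⟩ * of ⟨i, by omega⟩ *
        (of ⟨i + 1, h⟩ * of ⟨i, by omega⟩ * of ⟨i + 1, h⟩)⁻¹)
      (Or.inr ⟨_, _, Or.inl rfl, rfl⟩)
    rw [map_mul, map_inv, mul_inv_eq_one, map_mul, map_mul, map_mul, map_mul] at this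
    exact this

theorem artHom_gs {n i : ℕ} (h : i < n - 1) : artHom n (gs n i) = art i := by
  rw [gs_lt h, artHom, PresentedGroup.toGroup.of]

theorem permHom_gs {n i : ℕ} (h : i < n - 1) : permHom n (gs n i) = tr n ⟨i, h⟩ := by
  rw [gs_lt h, permHom, PresentedGroup.toGroup.of]

theorem artAct (n : ℕ) : ArtinAct (gs n) (n - 1) (artHom n) where
  act0 j hj := by rw [artHom_gs hj, art_apply, artF_0]
  act1 j hj := by rw [artHom_gs hj, art_apply, artF_1]
  act2 j hj i h h' := by rw [artHom_gs hj, art_apply, artF_2 h h']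

theorem mem_bH_top (n : ℕ) (g : BraidGroup n) : g ∈ bH (gs n) (n - 1) := by
  have h : (⊤ : Subgroup (BraidGroup n)) ≤ bH (gs n) (n - 1) := by
    rw [← PresentedGroup.closure_range_of (braidRels n), Subgroup.closure_le]
    rintro _ ⟨i, rfl⟩
    exact Subgroup.subset_closure ⟨i.val, i.isLt, by rw [gs_lt i.isLt]⟩
  exact h (Subgroup.mem_top g)

theorem artHom_faithful {n : ℕ} {g : BraidGroup n} (h : artHom n g = 1) : g = 1 :=
  faithful (gs_seq n) (artAct n) (n - 1) le_rfl g (mem_bH_top n g) h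

theorem artHom_perm (n : ℕ) (g : BraidGroup n) : ∀ i : Fin n, ∃ w,
    artHom n g (of i.val) = w * of (permHom n g i).val * w⁻¹ := by
  have hg := mem_bH_top n g
  induction hg using Subgroup.closure_induction with
  | mem x hx =>
    obtain ⟨j, hj, rfl⟩ := hx
    intro i
    rw [artHom_gs hj, permHom_gs hj, art_apply, tr_apply]
    by_cases h1 : i.val = j
    · refine ⟨of j, ?_⟩
      simp [h1, artF_0, tn_0]
    · by_cases h2 : i.val = j + 1
      · refine ⟨1, ?_⟩
        simp [h2, artF_1, tn_1]
      · refine ⟨1, ?_⟩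
        simp [h1, h2, artF_2, tn_2]
  | one => intro i; exact ⟨1, by simp⟩
  | mul x y _ _ hx hy =>
    intro i
    obtain ⟨w, hw⟩ := hy i
    obtain ⟨v, hv⟩ := hx (permHom n y i)
    refine ⟨artHom n x w * v, ?_⟩
    rw [map_mul, MulAut.mul_apply, hw, map_mul, map_mul, hv, map_mul, Equiv.Perm.mul_apply, map_inv]
    group
  | inv x _ hx =>
    intro i
    obtain ⟨w, hw⟩ := hx ((permHom n x)⁻¹ i)
    rw [← Equiv.Perm.mul_apply, mul_inv_cancel, Equiv.Perm.one_apply] at hw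
    have := act_inv_of hw
    rw [map_mul, map_mul, map_inv (artHom n x⁻¹) w] at this
    refine ⟨(artHom n x⁻¹ w)⁻¹, ?_⟩
    rw [map_inv (permHom n), ← this]
    group

theorem artHom_ia {n : ℕ} {g : BraidGroup n} (h : permHom n g = 1) :
    ∀ x, ga (artHom n g x) - ga x ∈ augI (FreeGroup ℕ) ^ 2 := by
  have base : ∀ i, ga (artHom n g (of i)) - ga (of i) ∈ augI (FreeGroup ℕ) ^ 2 := by
    intro i
    by_cases hi : i < n
    · obtain ⟨w, hw⟩ := artHom_perm n g ⟨i, hi⟩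
      rw [h] at hw
      simp only [Equiv.Perm.one_apply] at hw
      rw [hw]
      exact ia_conj _ _
    · by_cases hn : n = 0
      · have hg := mem_bH_top n g
        have hb : bH (gs n) (n - 1) = ⊥ := by subst hn; simp [bH]
        rw [hb, Subgroup.mem_bot] at hg
        rw [hg, map_one, MulAut.one_apply, sub_self]
        exact zero_mem _
      · rw [bH_fix (artAct n) le_rfl (mem_bH_top n g) (by omega), sub_self]
        exact zero_mem _
  intro x
  induction x using FreeGroup.induction_on with
  | C1 => rw [map_one, sub_self]; exact zero_mem _
  | of i => exact base i
  | inv_of i _ => rw [map_inv]; exact ia_inv (base i)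
  | mul x y hx hy => rw [map_mul]; exact ia_mul hx hy

theorem pure_roots {n : ℕ} {a b : BraidGroup n} (ha : permHom n a = 1) (hb : permHom n b = 1)
    {m : ℕ} (hm : 0 < m) (h : a ^ m = b ^ m) : a = b := by
  have h1 : artHom n a = artHom n b :=
    ia_roots _ _ (artHom_ia ha) (artHom_ia hb) m hm (by rw [← map_pow, ← map_pow, h])
  have h2 : a * b⁻¹ = 1 := artHom_faithful (by rw [map_mul, map_inv, h1, mul_inv_cancel])
  exact mul_inv_eq_one.mp h2

theorem pure_commute {n : ℕ} {a b : BraidGroup n} (ha : permHom n a = 1)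
    {m : ℕ} (hm : 0 < m) (h : Commute (a ^ m) b) : Commute a b := by
  have h1 : b * a * b⁻¹ = a := by
    refine pure_roots (m := m) ?_ ha hm ?_
    · rw [map_mul, map_mul, ha, map_inv]; simp
    · rw [conj_pow, ← h.eq]; simp
  show a * b = b * a
  rw [mul_inv_eq_iff_eq_mul] at h1
  exact h1.symm

theorem perm_fact {n : ℕ} (a : BraidGroup n) : permHom n (a ^ n.factorial) = 1 := by
  rw [map_pow]
  have : n.factorial = Fintype.card (Equiv.Perm (Fin n)) := by simp [Fintype.card_perm]
  rw [this, pow_card_eq_one]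

end Final

end BraidAux

/-- If `α^M` and `β^M` commute for some non-zero integer `M`, then
`α^(n!)` and `β^(n!)` commute. -/
theorem commute_factorial_pow {n : ℕ} (hn : 2 ≤ n) (α β : BraidGroup n)
    (M : ℤ) (hM : M ≠ 0) (h : Commute (α ^ M) (β ^ M)) :
    Commute (α ^ n.factorial) (β ^ n.factorial) := by
  have hm : 0 < M.natAbs := Int.natAbs_pos.mpr hM
  have h' : Commute (α ^ M.natAbs) (β ^ M.natAbs) := by
    rcases Int.natAbs_eq M with e | e
    · rw [e, zpow_natCast, zpow_natCast] at h; exact h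
    · rw [e, zpow_neg, zpow_neg, zpow_natCast, zpow_natCast, Commute.inv_inv_iff] at h; exact h
  have h2 : Commute ((α ^ n.factorial) ^ M.natAbs) ((β ^ n.factorial) ^ M.natAbs) := by
    rw [← pow_mul, ← pow_mul, mul_comm, pow_mul, pow_mul]
    exact h'.pow_pow _ _
  have h3 := BraidAux.pure_commute (BraidAux.perm_fact α) hm h2
  exact (BraidAux.pure_commute (BraidAux.perm_fact β) hm h3.symm).symm
end

section
/- Let s = (β_1, β_2) ∈ B_3^2 be a degree 3, length 2 braid system whose Hurwitz orbit s·B_2 is finite. Then the Hurwitz orbit has at most 6 elements: #(s·B_2) ≤ 6. -/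
namespace HurwitzSix

/-- First Artin generator. -/
def s1 : BraidGroup 3 := PresentedGroup.of (0 : Fin 2)
/-- Second Artin generator. -/
def s2 : BraidGroup 3 := PresentedGroup.of (1 : Fin 2)

theorem braid : s1 * s2 * s1 = s2 * s1 * s2 := by
  have h : PresentedGroup.mk (braidRels 3)
      (FreeGroup.of (0 : Fin 2) * FreeGroup.of (1 : Fin 2) * FreeGroup.of (0 : Fin 2) *
      (FreeGroup.of (1 : Fin 2) * FreeGroup.of (0 : Fin 2) * FreeGroup.of (1 : Fin 2))⁻¹) = 1 := by
    apply PresentedGroup.one_of_mem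
    exact Or.inr ⟨0, 1, Or.inl rfl, rfl⟩
  rw [map_mul, map_inv, mul_inv_eq_one, map_mul, map_mul, map_mul, map_mul] at h
  exact h

/-- `y = σ₁σ₂`. -/
def y : BraidGroup 3 := s1 * s2
/-- `x = σ₁σ₂σ₁`. -/
def x : BraidGroup 3 := s1 * s2 * s1
/-- The full twist. -/
def z : BraidGroup 3 := x * x

theorem x_s1 : x * s1 = s2 * x := by
  have h := braid
  unfold x
  calc s1 * s2 * s1 * s1 = (s1 * s2 * s1) * s1 := rfl
    _ = s2 * (s1 * s2 * s1) := by rw [h]; simp only [mul_assoc] at h ⊢; rw [h]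

theorem x_s2 : x * s2 = s1 * x := by
  have h := braid
  unfold x
  calc s1 * s2 * s1 * s2 = s1 * (s2 * s1 * s2) := by simp only [mul_assoc]
    _ = s1 * (s1 * s2 * s1) := by rw [h]

theorem z_s1 : Commute z s1 := by
  unfold z Commute SemiconjBy
  rw [mul_assoc, x_s1, ← mul_assoc, x_s2, mul_assoc]

theorem z_s2 : Commute z s2 := by
  unfold z Commute SemiconjBy
  rw [mul_assoc, x_s2, ← mul_assoc, x_s1, mul_assoc]

theorem z_y : Commute z y := z_s1.mul_right z_s2
theorem z_x : Commute z x := (z_s1.mul_right z_s2).mul_right z_s1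

theorem yyy : y * y * y = z := by
  unfold z
  have e : y * y * y = x * (s2 * s1 * s2) := by unfold x y; simp only [mul_assoc]
  rw [e, ← braid]; rfl

theorem yx : y * x = z * s2⁻¹ := by
  rw [eq_mul_inv_iff_mul_eq, mul_assoc, x_s2]
  unfold z
  rw [← mul_assoc]; rfl

theorem y_s1 : y * s1 = x := rfl

theorem yyx : y * y * x = z * s1 := by
  rw [← yyy, ← y_s1]; simp only [mul_assoc]

/-- The monoid generated by `σ₁` and `σ₂⁻¹`. -/
inductive N : BraidGroup 3 → Prop
  | one : N 1
  | mulL (m : BraidGroup 3) : N m → N (m * s1)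
  | mulR (m : BraidGroup 3) : N m → N (m * s2⁻¹)

/-- Normal forms. -/
def S (g : BraidGroup 3) : Prop :=
  ∃ (n : ℤ) (j m i : BraidGroup 3), (j = 1 ∨ j = x) ∧ N m ∧ (i = 1 ∨ i = y ∨ i = y * y) ∧
    g = z ^ n * (j * m * i)

theorem S_zmul {g : BraidGroup 3} (h : S g) (k : ℤ) : S (z ^ k * g) := by
  obtain ⟨n, j, m, i, hj, hm, hi, rfl⟩ := h
  exact ⟨k + n, j, m, i, hj, hm, hi, by rw [zpow_add]; simp only [mul_assoc]⟩

theorem S_of {j m i : BraidGroup 3} (hj : j = 1 ∨ j = x) (hm : N m)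
    (hi : i = 1 ∨ i = y ∨ i = y * y) : S (j * m * i) :=
  ⟨0, j, m, i, hj, hm, hi, by simp⟩

theorem z_central (g : BraidGroup 3) : Commute z g := by
  have : g ∈ Subgroup.centralizer {z} := by
    have h2 : (⊤ : Subgroup (BraidGroup 3)) ≤ Subgroup.centralizer {z} := by
      rw [← PresentedGroup.closure_range_of (braidRels 3), Subgroup.closure_le]
      rintro _ ⟨i, rfl⟩
      rw [SetLike.mem_coe, Subgroup.mem_centralizer_singleton_iff]
      change Fin 2 at i
      fin_cases i
      · exact z_s1.symm
      · exact z_s2.symm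
    exact h2 trivial
  rw [Subgroup.mem_centralizer_singleton_iff] at this
  exact Commute.symm this

theorem S_mul_y {g : BraidGroup 3} (h : S g) : S (g * y) := by
  obtain ⟨n, j, m, i, hj, hm, hi, rfl⟩ := h
  rw [mul_assoc]
  apply S_zmul
  rcases hi with rfl | rfl | rfl
  · have := S_of hj hm (i := y) (by simp)
    simpa using this
  · have := S_of hj hm (i := y * y) (by simp)
    simpa [mul_assoc] using this
  · have := S_zmul (S_of hj hm (i := 1) (by simp)) 1
    rw [mul_assoc, yyy, ← (z_central (j * m)).eq]
    simpa using this

theorem S_mul_x {g : BraidGroup 3} (h : S g) : S (g * x) := by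
  obtain ⟨n, j, m, i, hj, hm, hi, rfl⟩ := h
  rw [mul_assoc]
  apply S_zmul
  rcases hi with rfl | rfl | rfl
  · cases hm with
    | one =>
      rcases hj with rfl | rfl
      · simpa using S_of (j := x) (by simp) N.one (i := 1) (by simp)
      · have := S_zmul (S_of (j := 1) (by simp) N.one (i := 1) (by simp)) 1
        simpa [z] using this
    | mulL m hm =>
      have e : s1 * x = y * y := by
        apply mul_left_cancel (a := z)
        rw [← mul_assoc, ← yyx, mul_assoc (y * y), ← z, (z_central _).eq]
      have := S_of hj hm (i := y * y) (by simp)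
      rw [← e] at this
      simpa [mul_assoc] using this
    | mulR m hm =>
      have e : s2⁻¹ * x = y := by
        apply mul_left_cancel (a := z)
        rw [← mul_assoc, ← yx, mul_assoc y, ← z, (z_central _).eq]
      have := S_of hj hm (i := y) (by simp)
      rw [← e] at this
      simpa [mul_assoc] using this
  · have := S_zmul (S_of hj (N.mulR m hm) (i := 1) (by simp)) 1
    rw [mul_assoc, yx, ← mul_assoc, ← (z_central (j * m)).eq]
    simpa [mul_assoc] using this
  · have := S_zmul (S_of hj (N.mulL m hm) (i := 1) (by simp)) 1
    rw [mul_assoc, yyx, ← mul_assoc, ← (z_central (j * m)).eq]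
    simpa [mul_assoc] using this

theorem S_cancel {g : BraidGroup 3} (h : S (g * z)) : S g := by
  have := S_zmul h (-1)
  rw [← (z_central g).eq] at this
  simpa using this

theorem S_mul_xinv {g : BraidGroup 3} (h : S g) : S (g * x⁻¹) := by
  apply S_cancel
  have : g * x⁻¹ * z = g * x := by simp [z, mul_assoc]
  rw [this]; exact S_mul_x h

theorem S_mul_yinv {g : BraidGroup 3} (h : S g) : S (g * y⁻¹) := by
  apply S_cancel
  have : g * y⁻¹ * z = g * y * y := by rw [← yyy]; simp [mul_assoc]
  rw [this]; exact S_mul_y (S_mul_y h)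

theorem s1_eq : s1 = y⁻¹ * x := by rw [← y_s1]; simp
theorem s2_eq : s2 = x⁻¹ * y * y := by
  have h1 : y = s1 * s2 := rfl
  have : s2 = s1⁻¹ * y := by rw [h1]; simp
  rw [this, s1_eq]; simp

theorem S_all (g : BraidGroup 3) : S g := by
  have hg : g ∈ Subgroup.closure (Set.range (PresentedGroup.of (rels := braidRels 3))) := by
    rw [PresentedGroup.closure_range_of]; trivial
  induction hg using Subgroup.closure_induction_right with
  | one => simpa using S_of (j := 1) (by simp) N.one (i := 1) (by simp)
  | mul_right a ha b hb ih =>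
    obtain ⟨i, rfl⟩ := hb
    change Fin 2 at i
    fin_cases i
    · change S (a * s1)
      rw [s1_eq, ← mul_assoc]
      exact S_mul_x (S_mul_yinv ih)
    · change S (a * s2)
      rw [s2_eq, ← mul_assoc, ← mul_assoc]
      exact S_mul_y (S_mul_y (S_mul_xinv ih))
  | mul_inv_cancel a ha b hb ih =>
    obtain ⟨i, rfl⟩ := hb
    change Fin 2 at i
    fin_cases i
    · change S (a * s1⁻¹)
      rw [s1_eq, mul_inv_rev, inv_inv, ← mul_assoc]
      exact S_mul_y (S_mul_xinv ih)
    · change S (a * s2⁻¹)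
      rw [s2_eq, mul_inv_rev, mul_inv_rev, inv_inv, ← mul_assoc, ← mul_assoc]
      exact S_mul_x (S_mul_yinv (S_mul_yinv ih))

/-- Upper unipotent matrix. -/
def A1 : Matrix.SpecialLinearGroup (Fin 2) ℤ := ⟨!![1, 1; 0, 1], by simp [Matrix.det_fin_two]⟩
/-- Lower unipotent matrix. -/
def A2 : Matrix.SpecialLinearGroup (Fin 2) ℤ := ⟨!![1, 0; -1, 1], by simp [Matrix.det_fin_two]⟩

theorem A1_coe : (A1 : Matrix (Fin 2) (Fin 2) ℤ) = !![1, 1; 0, 1] := rfl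
theorem A2_coe : (A2 : Matrix (Fin 2) (Fin 2) ℤ) = !![1, 0; -1, 1] := rfl

theorem A_braid : A1 * A2 * A1 = A2 * A1 * A2 := by
  ext i j
  simp only [Matrix.SpecialLinearGroup.coe_mul, A1_coe, A2_coe]
  fin_cases i <;> fin_cases j <;> simp

/-- The representation on `SL₂(ℤ)`. -/
def rho : BraidGroup 3 →* Matrix.SpecialLinearGroup (Fin 2) ℤ :=
  PresentedGroup.toGroup (f := fun i : Fin 2 => if i = 0 then A1 else A2) (by
    rintro r (⟨i, j, h, rfl⟩ | ⟨i, j, h, rfl⟩)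
    · have := i.isLt; have := j.isLt; omega
    · change Fin 2 at i j
      rw [map_mul, map_inv, mul_inv_eq_one]
      fin_cases i <;> fin_cases j <;> simp at h <;> simp [A_braid])

theorem rho_s1 : rho s1 = A1 := by
  unfold rho s1; rw [PresentedGroup.toGroup.of]; simp
theorem rho_s2 : rho s2 = A2 := by
  unfold rho s2; rw [PresentedGroup.toGroup.of]; simp

theorem rho_y : (rho y : Matrix (Fin 2) (Fin 2) ℤ) = !![0, 1; -1, 1] := by
  simp only [y, map_mul, rho_s1, rho_s2, Matrix.SpecialLinearGroup.coe_mul, A1_coe, A2_coe]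
  simp
theorem rho_x : (rho x : Matrix (Fin 2) (Fin 2) ℤ) = !![0, 1; -1, 0] := by
  simp only [x, map_mul, rho_s1, rho_s2, Matrix.SpecialLinearGroup.coe_mul, A1_coe, A2_coe]
  simp
theorem rho_z : rho z = -1 := by
  ext i j
  rw [z, map_mul, Matrix.SpecialLinearGroup.coe_mul, rho_x]
  fin_cases i <;> fin_cases j <;> simp

theorem N_pos {m : BraidGroup 3} (h : N m) :
    ∃ a b c d : ℤ, (rho m : Matrix (Fin 2) (Fin 2) ℤ) = !![a, b; c, d] ∧ 1 ≤ a * d ∧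
      0 ≤ a ∧ 0 ≤ b ∧ 0 ≤ c ∧ 0 ≤ d ∧ (m = 1 ∨ 1 ≤ b + c) := by
  induction h with
  | one => exact ⟨1, 0, 0, 1, by simp [Matrix.one_fin_two], by simp⟩
  | mulL m hm ih =>
    obtain ⟨a, b, c, d, e, h1, ha, hb, hc, hd, -⟩ := ih
    have : 0 < a := by
      rcases ha.eq_or_lt with h | h
      · subst h; simp at h1
      · exact h
    refine ⟨a, a + b, c, c + d, ?_, ?_, ha, by positivity, hc, by positivity, Or.inr (by omega)⟩
    · rw [map_mul, Matrix.SpecialLinearGroup.coe_mul, e, rho_s1]; simp [A1]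
    · nlinarith [mul_nonneg ha hc]
  | mulR m hm ih =>
    obtain ⟨a, b, c, d, e, h1, ha, hb, hc, hd, -⟩ := ih
    have : 0 < d := by
      rcases hd.eq_or_lt with h | h
      · subst h; simp at h1
      · exact h
    refine ⟨a + b, b, c + d, d, ?_, ?_, by positivity, hb, by positivity, hd, Or.inr (by omega)⟩
    · rw [map_mul, map_inv, Matrix.SpecialLinearGroup.coe_mul, e, rho_s2,
        Matrix.SpecialLinearGroup.coe_inv]
      simp [A2, Matrix.adjugate_fin_two]
    · nlinarith [mul_nonneg hb hd]

theorem neg_one_zpow' (n : ℤ) : ((-1 : Matrix.SpecialLinearGroup (Fin 2) ℤ)) ^ n = 1 ∨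
    ((-1 : Matrix.SpecialLinearGroup (Fin 2) ℤ)) ^ n = -1 := by
  have h2 : (-1 : Matrix.SpecialLinearGroup (Fin 2) ℤ) ^ (2 : ℤ) = 1 := by
    rw [zpow_ofNat]; simp
  rcases Int.even_or_odd' n with ⟨k, rfl | rfl⟩
  · left; rw [zpow_mul, h2, one_zpow]
  · right; rw [zpow_add, zpow_mul, h2, one_zpow, one_mul, zpow_one]

theorem ker_central {g : BraidGroup 3} (h : rho g = 1) : ∃ n : ℤ, g = z ^ n := by
  obtain ⟨n, j, m, i, hj, hm, hi, rfl⟩ := S_all g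
  refine ⟨n, ?_⟩
  obtain ⟨a, b, c, d, e, h1, ha, hb, hc, hd, h3⟩ := N_pos hm
  rw [map_mul, map_zpow, rho_z] at h
  have h' : (rho (j * m * i) : Matrix (Fin 2) (Fin 2) ℤ) = 1 ∨
      (rho (j * m * i) : Matrix (Fin 2) (Fin 2) ℤ) = -1 := by
    rcases neg_one_zpow' n with h0 | h0 <;> rw [h0] at h
    · left; rw [one_mul] at h; rw [h]; simp
    · right
      have : rho (j * m * i) = -1 := by rw [← h]; simp
      rw [this]; simp
  clear h
  have key : i = 1 ∧ j = 1 ∧ m = 1 := by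
    simp only [map_mul, Matrix.SpecialLinearGroup.coe_mul, e] at h'
    have hadne : a ≠ 0 := by rintro rfl; simp at h1
    have hddne : d ≠ 0 := by rintro rfl; simp at h1
    rcases hj with rfl | rfl <;> rcases hi with rfl | rfl | rfl <;>
    simp only [map_mul, map_one, Matrix.SpecialLinearGroup.coe_mul,
      Matrix.SpecialLinearGroup.coe_one, rho_x, rho_y, Matrix.one_fin_two] at h' <;>
    simp [← Matrix.ext_iff, Fin.forall_fin_two] at h'
    · refine ⟨rfl, rfl, ?_⟩
      rcases h3 with h3 | h3
      · exact h3
      · omega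
    all_goals omega
  obtain ⟨rfl, rfl, rfl⟩ := key
  simp

theorem inj {g : BraidGroup 3} (h : rho g = 1) (he : esum g = 0) : g = 1 := by
  obtain ⟨n, rfl⟩ := ker_central h
  have h1 : expSumHom s1 = Multiplicative.ofAdd 1 := by
    unfold expSumHom s1; rw [PresentedGroup.toGroup.of]
  have h2 : expSumHom s2 = Multiplicative.ofAdd 1 := by
    unfold expSumHom s2; rw [PresentedGroup.toGroup.of]
  have : n = 0 := by
    simp [esum, z, x, h1, h2] at he
    omega
  simp [this]

theorem commute_of_rho {g k : BraidGroup 3} (h : Commute (rho g) (rho k)) : Commute g k := by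
  have : g * k * g⁻¹ * k⁻¹ = 1 := by
    apply inj
    · simp only [map_mul, map_inv]
      rw [h.eq]; simp
    · simp [esum]
  rw [mul_inv_eq_one, mul_inv_eq_iff_eq_mul] at this
  exact this

/-- Chebyshev-type sequence. -/
def U (t : ℤ) : ℕ → ℤ
  | 0 => 0
  | 1 => 1
  | n + 2 => t * U t (n + 1) - U t n

theorem U_lt {t : ℤ} (ht : 2 ≤ |t|) (n : ℕ) : |U t n| < |U t (n + 1)| := by
  induction n with
  | zero => simp [U]
  | succ n ih =>
    have e : U t (n + 1 + 1) = t * U t (n + 1) - U t n := rfl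
    rw [e]
    have h1 := abs_sub_abs_le_abs_sub (t * U t (n + 1)) (U t n)
    rw [abs_mul] at h1
    nlinarith [abs_nonneg (U t (n + 1))]

theorem pow_eq (A : Matrix (Fin 2) (Fin 2) ℤ) (hA : A.det = 1) (n : ℕ) :
    A ^ (n + 1) = U A.trace (n + 1) • A - U A.trace n • (1 : Matrix (Fin 2) (Fin 2) ℤ) := by
  have h2 : A * A = A.trace • A - 1 := by
    rw [Matrix.det_fin_two] at hA
    ext i j
    fin_cases i <;> fin_cases j <;>
      simp [-zsmul_eq_mul, Matrix.mul_apply, Fin.sum_univ_two, Matrix.trace_fin_two] <;> linarith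
  induction n with
  | zero => simp [U]
  | succ n ih =>
    rw [pow_succ, ih, sub_mul, smul_mul_assoc, h2]
    have e : U A.trace (n + 1 + 1) = A.trace * U A.trace (n + 1) - U A.trace n := rfl
    rw [e]
    simp only [smul_mul_assoc, one_mul]
    module

theorem main_mat (A M : Matrix.SpecialLinearGroup (Fin 2) ℤ) (k : ℕ)
    (h : Commute (A ^ (k + 1)) M) : Commute (A ^ 2) M ∨ Commute (A ^ 3) M := by
  have lift : ∀ n : ℕ, Commute ((A : Matrix (Fin 2) (Fin 2) ℤ) ^ n) M → Commute (A ^ n) M := by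
    intro n hn
    apply Subtype.ext
    simpa using hn.eq
  have h' : Commute ((A : Matrix (Fin 2) (Fin 2) ℤ) ^ (k + 1)) M := by
    have := congrArg Subtype.val h.eq
    unfold Commute SemiconjBy
    simpa using this
  have hdet := A.2
  generalize (A : Matrix (Fin 2) (Fin 2) ℤ) = B at *
  by_cases ht : 2 ≤ |B.trace|
  · left
    apply lift
    have hu : U B.trace (k + 1) ≠ 0 := by
      have := U_lt ht k
      intro h0
      rw [h0, abs_zero] at this
      exact absurd this (not_lt.mpr (abs_nonneg _))
    rw [pow_eq _ hdet] at h'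
    have h3 := h'.eq
    rw [sub_mul, mul_sub] at h3
    simp only [smul_mul_assoc, mul_smul_comm, one_mul, mul_one, sub_left_inj] at h3
    have h4 : Commute B (M : Matrix (Fin 2) (Fin 2) ℤ) := smul_right_injective _ hu h3
    exact h4.pow_left 2
  · have : B.trace = 0 ∨ B.trace = 1 ∨ B.trace = -1 := by
      rw [not_le, abs_lt] at ht; omega
    have h2 := pow_eq B hdet 1
    have h3 := pow_eq B hdet 2
    simp only [U] at h2 h3
    rcases this with e | e | e <;> rw [e] at h2 h3
    · left; apply lift; rw [h2]; simp
    · right; apply lift; rw [h3]; simp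
    · right; apply lift; rw [h3]; simp

theorem main_braid (c a : BraidGroup 3) (k : ℕ) (h : Commute (c ^ (k + 1)) a) :
    Commute (c ^ 2) a ∨ Commute (c ^ 3) a := by
  have h' : Commute (rho c ^ (k + 1)) (rho a) := by
    have := h.map rho; rwa [map_pow] at this
  rcases main_mat _ _ k h' with h | h
  · left; apply commute_of_rho; rwa [map_pow]
  · right; apply commute_of_rho; rwa [map_pow]

section orbit
variable {G : Type*} [Group G]

/-- The single Hurwitz move on pairs. -/
def H : Equiv.Perm (Fin 2 → G) := hEquiv (n := 2) (0 : Fin 1)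

theorem H_apply (s : Fin 2 → G) : H s = ![s 1, (s 1)⁻¹ * s 0 * s 1] := by
  funext k
  fin_cases k <;> simp [H, hEquiv]

theorem H2 (s : Fin 2 → G) (k : ℕ) :
    (H ^ (2 * k)) s = fun i => ((s 0 * s 1) ^ k)⁻¹ * s i * (s 0 * s 1) ^ k := by
  induction k with
  | zero => simp
  | succ k ih =>
    rw [Nat.mul_succ, Nat.add_comm, pow_add, Equiv.Perm.mul_apply, ih, pow_two,
      Equiv.Perm.mul_apply, H_apply, H_apply]
    have hc : ((s 0 * s 1) ^ k)⁻¹ * s 0 * (s 0 * s 1) ^ k * (((s 0 * s 1) ^ k)⁻¹ * s 1 * (s 0 * s 1) ^ k) = s 0 * s 1 := by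
      have : Commute (s 0 * s 1) ((s 0 * s 1) ^ k) := Commute.pow_right rfl k
      have e := this.eq
      generalize (s 0 * s 1) ^ k = q at *
      calc _ = q⁻¹ * (s 0 * s 1 * q) := by group
        _ = _ := by rw [e]; group
    generalize hq : (s 0 * s 1) ^ k = q at *
    rw [pow_succ, hq, ← hc]
    funext i
    fin_cases i
    · simp [mul_assoc]
    · simp [mul_assoc]

theorem act_pow (s : Fin 2 → G) (k : ℕ) : (H ^ k) s ∈ hurwitzOrbit s := by
  refine ⟨(FreeGroup.of (0 : Fin 1)) ^ k, ?_⟩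
  unfold hurwitzAct
  rw [map_pow, FreeGroup.lift_apply_of]
  rfl

theorem act_zpow (w : FreeGroup (Fin 1)) (s : Fin 2 → G) :
    ∃ k : ℤ, hurwitzAct (n := 2) w s = (H ^ k) s := by
  have : ∃ k : ℤ, FreeGroup.lift (fun i => MulOpposite.op (hEquiv (G := G) (n := 2) i)) w
      = MulOpposite.op H ^ k := by
    induction w using FreeGroup.induction_on with
    | C1 => exact ⟨0, by simp⟩
    | of i => exact ⟨1, by rw [FreeGroup.lift_apply_of, zpow_one, Subsingleton.elim i 0]; rfl⟩
    | inv_of i ih => obtain ⟨k, hk⟩ := ih; exact ⟨-k, by rw [map_inv, hk, zpow_neg]⟩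
    | mul a b iha ihb =>
      obtain ⟨k, hk⟩ := iha
      obtain ⟨l, hl⟩ := ihb
      exact ⟨k + l, by rw [map_mul, hk, hl, zpow_add]⟩
  obtain ⟨k, hk⟩ := this
  refine ⟨k, ?_⟩
  unfold hurwitzAct
  rw [hk]; simp

theorem orbit_le (s : Fin 2 → G) (p : ℕ) (hp : 0 < p) (h : (H ^ p) s = s) :
    (hurwitzOrbit s).ncard ≤ p := by
  classical
  have hsub : hurwitzOrbit s ⊆ ((Finset.range p).image (fun k => (H ^ k) s) : Finset _) := by
    rintro t ⟨w, rfl⟩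
    obtain ⟨k, hk⟩ := act_zpow w s
    rw [hk]
    have hfix : ∀ q : ℤ, ((H ^ p) ^ q) s = s := fun q =>
      Equiv.Perm.zpow_apply_eq_self_of_apply_eq_self h q
    have hp' : (0 : ℤ) < p := by exact_mod_cast hp
    have e : (H ^ k) s = (H ^ (k % p).toNat) s := by
      have h1 := Int.emod_add_mul_ediv k p
      have h2 := Int.emod_nonneg k hp'.ne'
      conv_lhs => rw [← h1, zpow_add, zpow_mul, zpow_natCast, Equiv.Perm.mul_apply, hfix,
        ← Int.toNat_of_nonneg h2, zpow_natCast]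
    rw [e]
    simp only [Finset.coe_image, Set.mem_image, Finset.mem_coe, Finset.mem_range]
    refine ⟨_, ?_, rfl⟩
    have h2 := Int.emod_nonneg k hp'.ne'
    have h3 := Int.emod_lt_of_pos k hp'
    omega
  calc _ ≤ _ := Set.ncard_le_ncard hsub (Finset.finite_toSet _)
    _ ≤ p := by
      rw [Set.ncard_coe_finset]
      exact Finset.card_image_le.trans (by simp)

theorem exists_period (s : Fin 2 → G) (h : (hurwitzOrbit s).Finite) :
    ∃ k : ℕ, (H ^ (k + 1)) s = s := by
  obtain ⟨a, -, b, -, hab, e⟩ := Set.infinite_univ.exists_ne_map_eq_of_mapsTo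
    (s := (Set.univ : Set ℕ)) (f := fun k => (H ^ k) s) (fun k _ => act_pow s k) h
  have key : ∀ a b : ℕ, a < b → (H ^ a) s = (H ^ b) s → ∃ k : ℕ, (H ^ (k + 1)) s = s := by
    intro a b hab e
    refine ⟨b - a - 1, ?_⟩
    have : b = a + (b - a - 1 + 1) := by omega
    rw [this, pow_add, Equiv.Perm.mul_apply] at e
    exact ((H ^ a).injective e).symm
  rcases lt_or_gt_of_ne hab with h | h
  · exact key a b h e
  · exact key b a h e.symm

end orbit

end HurwitzSix

/-- A degree `3`, length `2` braid system with finite Hurwitz orbit has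
orbit of size at most `6`. -/
theorem hurwitzOrbit_card_le_six (s : Fin 2 → BraidGroup 3)
    (h : (hurwitzOrbit s).Finite) :
    (hurwitzOrbit s).ncard ≤ 6 := by
  obtain ⟨k, hk⟩ := HurwitzSix.exists_period s h
  have h2 : (HurwitzSix.H ^ (2 * (k + 1))) s = s := by
    rw [two_mul, pow_add, Equiv.Perm.mul_apply, hk, hk]
  rw [HurwitzSix.H2] at h2
  have h0 : Commute ((s 0 * s 1) ^ (k + 1)) (s 0) := by
    have := congrFun h2 0
    simp only [mul_assoc] at this
    rw [inv_mul_eq_iff_eq_mul] at this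
    exact this.symm
  have fin : ∀ n : ℕ, Commute ((s 0 * s 1) ^ n) (s 0) → (HurwitzSix.H ^ (2 * n)) s = s := by
    intro n hn
    have h1 : Commute ((s 0 * s 1) ^ n) (s 1) := by
      have e : s 1 = (s 0)⁻¹ * (s 0 * s 1) := by simp
      have := hn.inv_right.mul_right (Commute.pow_left (Commute.refl (s 0 * s 1)) n)
      rwa [← e] at this
    rw [HurwitzSix.H2]
    funext i
    have : Commute ((s 0 * s 1) ^ n) (s i) := by
      fin_cases i
      · exact hn
      · exact h1
    rw [mul_assoc, ← this.eq]
    simp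
  rcases HurwitzSix.main_braid _ _ k h0 with h | h
  · exact (HurwitzSix.orbit_le s 4 (by norm_num) (fin 2 h)).trans (by norm_num)
  · exact HurwitzSix.orbit_le s 6 (by norm_num) (fin 3 h)
end

section
/- Let m ≥ 4 and let s = (β_1, β_2) ∈ B_m^2 be a degree m, length 2 braid system whose Hurwitz orbit s·B_2 is finite. Then #(s·B_2) ≤ 2·(m-1)!. -/
namespace Hw

abbrev F := FreeGroup ℕ

/-- `x_i ↦ x_{i+1}`, `x_{i+1} ↦ x_{i+1}⁻¹ x_i x_{i+1}`. -/
def artF (i : ℕ) : F →* F :=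
  FreeGroup.lift (fun j => if j = i then FreeGroup.of (i+1) else if j = i + 1 then
    (FreeGroup.of (i+1))⁻¹ * FreeGroup.of i * FreeGroup.of (i+1) else FreeGroup.of j)

def artB (i : ℕ) : F →* F :=
  FreeGroup.lift (fun j => if j = i then FreeGroup.of i * FreeGroup.of (i+1) * (FreeGroup.of i)⁻¹
    else if j = i + 1 then FreeGroup.of i else FreeGroup.of j)

def art (i : ℕ) : MulAut F :=
  MonoidHom.toMulEquiv (artF i) (artB i)
    (by
      ext j
      by_cases h1 : j = i
      · subst h1; simp [artF, artB]
      · by_cases h2 : j = i + 1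
        · subst h2; simp [artF, artB, mul_assoc]
        · simp [artF, artB, h1, h2])
    (by
      ext j
      by_cases h1 : j = i
      · subst h1; simp [artF, artB, mul_assoc]
      · by_cases h2 : j = i + 1
        · subst h2; simp [artF, artB, mul_assoc]
        · simp [artF, artB, h1, h2])

lemma art_self (i : ℕ) : art i (FreeGroup.of i) = FreeGroup.of (i+1) := by
  simp [art, artF]

lemma art_succ (i : ℕ) : art i (FreeGroup.of (i+1)) =
    (FreeGroup.of (i+1))⁻¹ * FreeGroup.of i * FreeGroup.of (i+1) := by
  simp [art, artF]

lemma art_ne (i j : ℕ) (h : j ≠ i) (h' : j ≠ i + 1) : art i (FreeGroup.of j) = FreeGroup.of j := by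
  simp [art, artF, h, h']

lemma mulAut_ext {f g : MulAut F} (h : ∀ j, f (FreeGroup.of j) = g (FreeGroup.of j)) : f = g := by
  have : f.toMonoidHom = g.toMonoidHom := by
    ext j; exact h j
  ext x
  exact DFunLike.congr_fun this x

lemma art_comm (i j : ℕ) (h : i + 2 ≤ j) : art i * art j = art j * art i := by
  apply mulAut_ext
  intro k
  simp only [MulAut.mul_apply]
  rcases eq_or_ne k i with rfl | h1
  · rw [art_ne j k (by omega) (by omega), art_self, art_ne j _ (by omega) (by omega)]
  rcases eq_or_ne k (i+1) with rfl | h2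
  · rw [art_ne j _ (by omega) (by omega), art_succ]
    simp only [map_mul, map_inv]
    rw [art_ne j _ (by omega) (by omega), art_ne j _ (by omega) (by omega)]
  rw [art_ne i k h1 h2]
  rcases eq_or_ne k j with rfl | h3
  · rw [art_self, art_ne i _ (by omega) (by omega)]
  rcases eq_or_ne k (j+1) with rfl | h4
  · rw [art_succ]
    simp only [map_mul, map_inv]
    rw [art_ne i _ (by omega) (by omega), art_ne i _ (by omega) (by omega)]
  rw [art_ne j k h3 h4, art_ne i k h1 h2]

lemma art_braid (i : ℕ) : art i * art (i+1) * art i = art (i+1) * art i * art (i+1) := by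
  have e1 := art_self i
  have e2 := art_succ i
  have e3 := art_self (i+1)
  have e4 := art_succ (i+1)
  have e5 := art_ne i (i+1+1) (by omega) (by omega)
  have e6 := art_ne (i+1) i (by omega) (by omega)
  apply mulAut_ext
  intro k
  simp only [MulAut.mul_apply]
  rcases eq_or_ne k i with rfl | h1
  · simp only [e1, e3, e5, e6]
  rcases eq_or_ne k (i+1) with rfl | h2
  · simp only [e1, e2, e3, e4, e5, e6, map_mul, map_inv]
  rcases eq_or_ne k (i+1+1) with rfl | h3
  · simp only [e1, e2, e3, e4, e5, e6, map_mul, map_inv]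
    group
  rw [art_ne i k h1 h2, art_ne (i+1) k h2 h3, art_ne i k h1 h2, art_ne (i+1) k h2 h3]

/-- kill `x_n` -/
def kill (n : ℕ) : F →* F := FreeGroup.lift (fun j => if j = n then 1 else FreeGroup.of j)

lemma kill_self (n : ℕ) : kill n (FreeGroup.of n) = 1 := by simp [kill]
lemma kill_ne (n j : ℕ) (h : j ≠ n) : kill n (FreeGroup.of j) = FreeGroup.of j := by
  simp [kill, h]

/-! ### centralizer lemma -/

def shiftN : Equiv.Perm (F × ℤ) where
  toFun p := (p.1, p.2 + if p.1 = 1 then 1 else 0)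
  invFun p := (p.1, p.2 - if p.1 = 1 then 1 else 0)
  left_inv p := by simp
  right_inv p := by simp

def leftM (g : F) : Equiv.Perm (F × ℤ) where
  toFun p := (g * p.1, p.2)
  invFun p := (g⁻¹ * p.1, p.2)
  left_inv p := by simp
  right_inv p := by simp

def wr (n : ℕ) : F →* Equiv.Perm (F × ℤ) :=
  FreeGroup.lift (fun j => if j = n then shiftN else leftM (FreeGroup.of j))

lemma wr_spec (n : ℕ) (g : F) : ∀ h : F, ∃ z : ℤ, ∀ t : ℤ, wr n g (h, t) = (kill n g * h, t + z) := by
  induction g using FreeGroup.induction_on with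
  | C1 => intro h; exact ⟨0, by simp⟩
  | of j =>
    intro h
    by_cases hj : j = n
    · subst hj
      refine ⟨if h = 1 then 1 else 0, fun t => ?_⟩
      simp [wr, shiftN, kill]
    · refine ⟨0, fun t => ?_⟩
      simp [wr, leftM, kill, hj]
  | inv_of j ih =>
    intro h
    obtain ⟨z, hz⟩ := ih ((kill n (FreeGroup.of j))⁻¹ * h)
    refine ⟨-z, fun t => ?_⟩
    rw [map_inv, Equiv.Perm.inv_eq_iff_eq, map_inv, hz]
    simp
  | mul x y ihx ihy =>
    intro h
    obtain ⟨z, hz⟩ := ihy h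
    obtain ⟨z', hz'⟩ := ihx (kill n y * h)
    refine ⟨z + z', fun t => ?_⟩
    rw [map_mul, Equiv.Perm.mul_apply, hz, hz', map_mul, mul_assoc, add_assoc]

lemma kill_eq_one_of_comm (n : ℕ) (g : F) (h : g * FreeGroup.of n = FreeGroup.of n * g) :
    kill n g = 1 := by
  have h2 := congrArg (fun x => wr n x ((1 : F), (0:ℤ))) h
  simp only [map_mul, Equiv.Perm.mul_apply] at h2
  obtain ⟨z, hz⟩ := wr_spec n g 1
  have e : ∀ p, wr n (FreeGroup.of n) p = shiftN p := by intro p; simp [wr]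
  rw [e, e, hz] at h2
  simp only [shiftN, Equiv.coe_fn_mk, if_true] at h2
  rw [hz] at h2
  simp only [Prod.mk.injEq, true_and, mul_one] at h2
  by_contra hne
  rw [if_neg hne] at h2
  omega

/-! ### abelianization count -/
lemma of_isConj {i j : ℕ} (h : IsConj (FreeGroup.of i : F) (FreeGroup.of j)) : i = j := by
  by_contra hne
  obtain ⟨c, hc⟩ := isConj_iff.1 h
  have := congrArg (FreeGroup.lift (fun k => if k = i then Multiplicative.ofAdd (1:ℤ) else 1)) hc
  simp [Ne.symm hne] at this

section faithful

variable {G : Type*} [Group G] (s : ℕ → G)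

def MM : ℕ → ℕ → G
  | 0, _ => 1
  | n+1, j => if j ≤ n then s n * MM n j else 1

lemma MM_of_le {n j : ℕ} (h : n ≤ j) : MM s n j = 1 := by
  cases n with
  | zero => rfl
  | succ n => simp [MM, show ¬ j ≤ n by omega]

lemma MM_succ (n j : ℕ) (h : j < n) : MM s n j = MM s n (j+1) * s j := by
  induction n with
  | zero => omega
  | succ n ih =>
    by_cases hj : j = n
    · subst hj
      simp [MM, MM_of_le]
    · rw [MM, MM, if_pos (by omega), if_pos (by omega), ih (by omega), mul_assoc]

def AA (n i : ℕ) : G := MM s n (i+1) * (s i * s i) * (MM s n (i+1))⁻¹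

variable (m : ℕ)

structure IsBr : Prop where
  comm : ∀ i j, i + 2 ≤ j → j + 1 < m → s i * s j = s j * s i
  braid : ∀ i, i + 2 < m → s i * s (i+1) * s i = s (i+1) * s i * s (i+1)

variable {s m}

lemma MM_comm (hs : IsBr s m) (n : ℕ) (hn : n < m) (k j : ℕ) (hk : k + 1 < j) :
    s k * MM s n j = MM s n j * s k := by
  induction n with
  | zero => simp [MM]
  | succ n ih =>
    by_cases hj : j ≤ n
    · rw [MM, if_pos hj, ← mul_assoc, hs.comm k n (by omega) (by omega), mul_assoc,
        ih (by omega), mul_assoc]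
    · simp [MM, hj]

lemma MM_shift (hs : IsBr s m) (n : ℕ) (hn : n < m) (k d : ℕ) : ∀ j, j + d = k → k + 1 < n →
    s k * MM s n j = MM s n j * s (k+1) := by
  induction d with
  | zero =>
    rintro j rfl hk
    simp only [add_zero] at *
    rw [MM_succ s n j (by omega), MM_succ s n (j+1) (by omega)]
    have h1 := MM_comm hs n hn j (j+1+1) (by omega)
    have h2 := hs.braid j (by omega)
    calc _ = (s j * MM s n (j+1+1)) * s (j+1) * s j := by group
      _ = MM s n (j+1+1) * (s j * s (j+1) * s j) := by rw [h1]; group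
      _ = _ := by rw [h2]; group
  | succ d ih =>
    intro j hj hk
    rw [MM_succ s n j (by omega), ← mul_assoc, ih (j+1) (by omega) hk, mul_assoc,
      ← hs.comm j (k+1) (by omega) (by omega), mul_assoc]

lemma AA_comm (hs : IsBr s m) (n : ℕ) (hn : n < m) (k i : ℕ) (hi : i < n) (hk : k + 1 < n)
    (h1 : i ≠ k) (h2 : i ≠ k + 1) : s k * AA s n i * (s k)⁻¹ = AA s n i := by
  rw [mul_inv_eq_iff_eq_mul]
  rcases lt_or_ge k i with h | h
  · have c1 : Commute (s k) (MM s n (i+1)) := MM_comm hs n hn k (i+1) (by omega)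
    have c2 : Commute (s k) (s i) := hs.comm k i (by omega) (by omega)
    exact ((c1.mul_right (c2.mul_right c2)).mul_right c1.inv_right)
  · have c1 := MM_shift hs n hn k (k-(i+1)) (i+1) (by omega) hk
    have c2 : Commute (s (k+1)) (s i) := (hs.comm i (k+1) (by omega) (by omega)).symm
    have c3 := (c2.mul_right c2).eq
    rw [AA, ← mul_assoc, ← mul_assoc, c1, mul_assoc (MM s n (i+1)), c3]
    have c4 : s (k+1) * (MM s n (i+1))⁻¹ = (MM s n (i+1))⁻¹ * s k := by
      rw [eq_inv_mul_iff_mul_eq, ← mul_assoc, ← c1]; group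
    rw [mul_assoc, mul_assoc, mul_assoc _ _ (s k), ← c4]
    group

lemma AA_one (hs : IsBr s m) (n : ℕ) (hn : n < m) (k : ℕ) (hk : k + 1 < n) :
    s k * AA s n k * (s k)⁻¹ = AA s n (k+1) := by
  have h1 := MM_comm hs n hn k (k+1+1) (by omega)
  have h2 := hs.braid k (by omega)
  rw [mul_inv_eq_iff_eq_mul, AA, AA, MM_succ s n (k+1) (by omega)]
  generalize MM s n (k+1+1) = x at *
  generalize s k = a at *
  generalize s (k+1) = b at *
  have h3 : x⁻¹ * a = a * x⁻¹ := by rw [inv_mul_eq_iff_eq_mul, ← mul_assoc, ← h1]; group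
  calc a * (x * b * (a * a) * (x * b)⁻¹) = (a * x) * (b * a * a * b⁻¹ * x⁻¹) := by group
    _ = x * (a * b * a) * (a * b⁻¹ * x⁻¹) := by rw [h1]; group
    _ = x * b * (a * b * a) * (b⁻¹ * x⁻¹) := by
      conv_lhs => rw [h2]
      group
    _ = x * b * b * (a * x⁻¹) := by rw [h2]; group
    _ = _ := by rw [← h3]; group

lemma AA_two (hs : IsBr s m) (n : ℕ) (hn : n < m) (k : ℕ) (hk : k + 1 < n) :
    s k * AA s n (k+1) * (s k)⁻¹ = (AA s n (k+1))⁻¹ * AA s n k * AA s n (k+1) := by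
  have h1 := MM_comm hs n hn k (k+1+1) (by omega)
  have h2 := hs.braid k (by omega)
  rw [mul_inv_eq_iff_eq_mul, AA, AA, MM_succ s n (k+1) (by omega)]
  generalize MM s n (k+1+1) = x at *
  generalize s k = a at *
  generalize s (k+1) = b at *
  have h3 : x⁻¹ * a = a * x⁻¹ := by rw [inv_mul_eq_iff_eq_mul, ← mul_assoc, ← h1]; group
  calc a * (x * (b * b) * x⁻¹) = (a * x) * (b * b * x⁻¹) := by group
    _ = x * b⁻¹ * (b * a * b) * (b * x⁻¹) := by rw [h1]; group
    _ = x * b⁻¹ * a * (b * a * b) * x⁻¹ := by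
      conv_lhs => rw [← h2]
      group
    _ = x * b⁻¹ * a * a * b * (a * x⁻¹) := by rw [← h2]; group
    _ = _ := by rw [← h3]; group

variable (s) in
def theta (n : ℕ) : FreeGroup (Fin n) →* G := FreeGroup.lift (fun i => AA s n i)

lemma AA_mem {n i : ℕ} (hi : i < n) : AA s n i ∈ (theta s n).range :=
  ⟨FreeGroup.of ⟨i, hi⟩, by simp [theta]⟩

variable (s) in
def HH (n : ℕ) : Subgroup G := Subgroup.closure {g | ∃ k, k + 1 < n ∧ g = s k}

lemma s_mem {n k : ℕ} (hk : k + 1 < n) : s k ∈ HH s n := Subgroup.subset_closure ⟨k, hk, rfl⟩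

lemma conj_mem (hs : IsBr s m) (n : ℕ) (hn : n < m) (k : ℕ) (hk : k + 1 < n) (u : G)
    (hu : u ∈ (theta s n).range) : s k * u * (s k)⁻¹ ∈ (theta s n).range ∧
      (s k)⁻¹ * u * s k ∈ (theta s n).range := by
  obtain ⟨w, rfl⟩ := hu
  induction w using FreeGroup.induction_on with
  | C1 => simp [one_mem]
  | of j =>
    obtain ⟨i, hi⟩ := j
    have e : theta s n (FreeGroup.of ⟨i, hi⟩) = AA s n i := by simp [theta]
    rw [e]
    have o := AA_one hs n hn k hk
    have t := AA_two hs n hn k hk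
    have mk := AA_mem (s := s) (n := n) (i := k) (by omega)
    have mk' := AA_mem (s := s) (n := n) (i := k+1) (by omega)
    have o' : (s k)⁻¹ * AA s n (k+1) * s k = AA s n k := by rw [← o]; group
    by_cases h1 : i = k
    · subst h1
      refine ⟨o ▸ mk', ?_⟩
      have : (s i)⁻¹ * AA s n i * s i = AA s n i * AA s n (i+1) * (AA s n i)⁻¹ := by
        have e2 : AA s n i = AA s n (i+1) * (s i * AA s n (i+1) * (s i)⁻¹) * (AA s n (i+1))⁻¹ := by
          rw [t]; group
        calc _ = ((s i)⁻¹ * AA s n (i+1) * s i) * AA s n (i+1) *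
              ((s i)⁻¹ * AA s n (i+1) * s i)⁻¹ := by
              conv_lhs => rw [e2]
              group
          _ = _ := by rw [o']
      rw [this]
      exact mul_mem (mul_mem mk mk') (inv_mem mk)
    by_cases h2 : i = k + 1
    · subst h2
      rw [t, o']
      exact ⟨mul_mem (mul_mem (inv_mem mk') mk) mk', mk⟩
    have c := AA_comm hs n hn k i hi hk h1 h2
    refine ⟨by rw [c]; exact AA_mem hi, ?_⟩
    have : (s k)⁻¹ * AA s n i * s k = AA s n i := by
      conv_lhs => rw [← c]
      group
    rw [this]; exact AA_mem hi
  | inv_of j ih =>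
    rw [map_inv]
    generalize theta s n (FreeGroup.of j) = u at *
    refine ⟨?_, ?_⟩
    · have := inv_mem ih.1
      convert this using 1; group
    · have := inv_mem ih.2
      convert this using 1; group
  | mul x y ihx ihy =>
    rw [map_mul]
    generalize theta s n x = u at *
    generalize theta s n y = v at *
    refine ⟨?_, ?_⟩
    · have := mul_mem ihx.1 ihy.1
      convert this using 1; group
    · have := mul_mem ihx.2 ihy.2
      convert this using 1; group

lemma conj_mem_H (hs : IsBr s m) (n : ℕ) (hn : n < m) (h : G) (hh : h ∈ HH s n) : ∀ (u : G)
    (_ : u ∈ (theta s n).range), h * u * h⁻¹ ∈ (theta s n).range := by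
  induction hh using Subgroup.closure_induction'' with
  | one => intro u hu; simpa using hu
  | mem x hx =>
    obtain ⟨k, hk, rfl⟩ := hx
    exact fun u hu => (conj_mem hs n hn k hk u hu).1
  | inv_mem x hx =>
    obtain ⟨k, hk, rfl⟩ := hx
    exact fun u hu => by simpa using (conj_mem hs n hn k hk u hu).2
  | mul x y _ _ ihx ihy =>
    intro u hu
    have := ihx _ (ihy u hu)
    convert this using 1; group

/-- Coset decomposition. -/
lemma decomp (hs : IsBr s m) (n : ℕ) (hn : n < m) (b : G) (hb : b ∈ HH s (n+1)) :
    ∃ u ∈ (theta s n).range, ∃ h ∈ HH s n, ∃ j ≤ n, b = u * h * MM s n j := by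
  have key : ∀ u ∈ (theta s n).range, ∀ h ∈ HH s n, ∀ j ≤ n, ∀ v ∈ (theta s n).range, ∀ g ∈ HH s n,
      ∀ i ≤ n, ∀ x, MM s n j * x = v * g * MM s n i → 
      ∃ u' ∈ (theta s n).range, ∃ h' ∈ HH s n, ∃ j' ≤ n,
        u * h * MM s n j * x = u' * h' * MM s n j' := by
    intro u hu h hh j hj v hv g hg i hi x hx
    refine ⟨u * (h * v * h⁻¹), mul_mem hu (conj_mem_H hs n hn h hh v hv), h * g, mul_mem hh hg, i, hi, ?_⟩
    rw [mul_assoc (u * h), hx]; group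
  unfold HH at hb
  induction hb using Subgroup.closure_induction_right with
  | one => exact ⟨1, one_mem _, 1, one_mem _, n, le_rfl, by simp [MM_of_le]⟩
  | mul_right x hx y hy ih =>
    obtain ⟨u, hu, h, hh, j, hj, rfl⟩ := ih
    obtain ⟨k, hk, rfl⟩ := hy
    rcases lt_trichotomy (k+1) j with h1 | h1 | h1
    · exact key u hu h hh j hj 1 (one_mem _) (s k) (s_mem (by omega)) j hj _ (by
        rw [← MM_comm hs n hn k j h1]; group)
    · subst h1
      exact key u hu h hh _ hj 1 (one_mem _) 1 (one_mem _) k (by omega) _ (by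
        rw [MM_succ s n k (by omega)]; group)
    rcases eq_or_ne k j with rfl | h2
    · exact key u hu h hh _ hj (AA s n k) (AA_mem (by omega)) 1 (one_mem _) (k+1) (by omega) _ (by
        rw [MM_succ s n k (by omega), AA]; group)
    · obtain ⟨k, rfl⟩ : ∃ k', k = k' + 1 := ⟨k-1, by omega⟩
      exact key u hu h hh _ hj 1 (one_mem _) (s k) (s_mem (by omega)) j hj _ (by
        rw [← MM_shift hs n hn k (k-j) j (by omega) (by omega)]; group)
  | mul_inv_cancel x hx y hy ih =>
    obtain ⟨u, hu, h, hh, j, hj, rfl⟩ := ih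
    obtain ⟨k, hk, rfl⟩ := hy
    rcases lt_trichotomy (k+1) j with h1 | h1 | h1
    · exact key u hu h hh j hj 1 (one_mem _) (s k)⁻¹ (inv_mem (s_mem (by omega))) j hj _ (by
        have := MM_comm hs n hn k j h1
        rw [mul_inv_eq_iff_eq_mul, mul_assoc, ← this]; group)
    · subst h1
      exact key u hu h hh _ hj (AA s n k)⁻¹ (inv_mem (AA_mem (by omega))) 1 (one_mem _) k (by omega) _ (by
        rw [MM_succ s n k (by omega), AA]; group)
    rcases eq_or_ne k j with rfl | h2
    · exact key u hu h hh _ hj 1 (one_mem _) 1 (one_mem _) (k+1) (by omega) _ (by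
        rw [MM_succ s n k (by omega)]; group)
    · obtain ⟨k, rfl⟩ : ∃ k', k = k' + 1 := ⟨k-1, by omega⟩
      exact key u hu h hh _ hj 1 (one_mem _) (s k)⁻¹ (inv_mem (s_mem (by omega))) j hj _ (by
        have := MM_shift hs n hn k (k-j) j (by omega) (by omega)
        rw [mul_inv_eq_iff_eq_mul, mul_assoc, ← this]; group)

/-- swap of `x_i` and `x_{i+1}` -/
def swp (i : ℕ) : F →* F := FreeGroup.map (Equiv.swap i (i+1))

lemma kill_art (i : ℕ) (x : F) : kill (i+1) (art i x) = swp i (kill i x) := by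
  have : (kill (i+1)).comp (art i).toMonoidHom = (swp i).comp (kill i) := by
    ext j
    simp only [MonoidHom.comp_apply, MulEquiv.toMonoidHom_eq_coe, MonoidHom.coe_coe]
    rcases eq_or_ne j i with rfl | h1
    · rw [art_self, kill_self, kill_self, map_one]
    rcases eq_or_ne j (i+1) with rfl | h2
    · rw [art_succ, kill_ne i (i+1) (by omega)]
      simp [kill_self, kill_ne (i+1) i (by omega), swp]
    · rw [art_ne i j h1 h2, kill_ne _ _ h1, kill_ne _ _ h2]
      simp [swp, Equiv.swap_apply_of_ne_of_ne h1 h2]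
  exact DFunLike.congr_fun this x

lemma kill_art_sq (i : ℕ) (x : F) : kill (i+1) (art i (art i x)) = kill (i+1) x := by
  have : (kill (i+1)).comp ((art i).toMonoidHom.comp (art i).toMonoidHom) = (kill (i+1)) := by
    ext j
    simp only [MonoidHom.comp_apply, MulEquiv.toMonoidHom_eq_coe, MonoidHom.coe_coe]
    rcases eq_or_ne j i with rfl | h1
    · rw [art_self, art_succ]; simp [kill_self]
    rcases eq_or_ne j (i+1) with rfl | h2
    · rw [art_succ]; simp [kill_self, art_self, art_succ, kill_ne (i+1) i (by omega)]
    · rw [art_ne i j h1 h2, art_ne i j h1 h2]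
  exact DFunLike.congr_fun this x

lemma kill_art_far (i n : ℕ) (h : i + 1 < n) (x : F) : kill n (art i x) = art i (kill n x) := by
  have : (kill n).comp (art i).toMonoidHom = (art i).toMonoidHom.comp (kill n) := by
    ext j
    simp only [MonoidHom.comp_apply, MulEquiv.toMonoidHom_eq_coe, MonoidHom.coe_coe]
    rcases eq_or_ne j i with rfl | h1
    · rw [art_self, kill_ne _ _ (by omega), kill_ne _ _ (by omega), art_self]
    rcases eq_or_ne j (i+1) with rfl | h2
    · rw [art_succ, kill_ne _ _ (by omega), art_succ]
      simp only [map_mul, map_inv]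
      rw [kill_ne _ _ (by omega), kill_ne _ _ (by omega)]
    rw [art_ne i j h1 h2]
    rcases eq_or_ne j n with rfl | h3
    · rw [kill_self, map_one]
    · rw [kill_ne _ _ h3, art_ne i j h1 h2]
  exact DFunLike.congr_fun this x

variable {ρ : G →* MulAut F}

lemma rho_MM_self (hρ : ∀ i, i + 1 < m → ρ (s i) = art i) (n : ℕ) (hn : n < m) (j : ℕ)
    (hj : j ≤ n) : ρ (MM s n j) (FreeGroup.of j) = FreeGroup.of n := by
  induction n with
  | zero =>
    obtain rfl : j = 0 := by omega
    simp [MM]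
  | succ n ih =>
    rcases eq_or_ne j (n+1) with rfl | h
    · simp [MM]
    · rw [MM, if_pos (by omega), map_mul, MulAut.mul_apply, ih (by omega) (by omega),
        hρ n (by omega), art_self]

lemma rho_MM_lt (hρ : ∀ i, i + 1 < m → ρ (s i) = art i) (n : ℕ) (hn : n < m) (i j : ℕ)
    (hj : i < j) : ρ (MM s n j) (FreeGroup.of i) = FreeGroup.of i := by
  induction n with
  | zero => simp [MM]
  | succ n ih =>
    by_cases h : j ≤ n
    · rw [MM, if_pos h, map_mul, MulAut.mul_apply, ih (by omega),
        hρ n (by omega), art_ne _ _ (by omega) (by omega)]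
    · simp [MM, h]

lemma kill_MM (hρ : ∀ i, i + 1 < m → ρ (s i) = art i) (n : ℕ) (hn : n < m) (j : ℕ)
    (hj : j ≤ n) : ∃ S : F →* F, ∀ x, kill n (ρ (MM s n j) x) = S (kill j x) := by
  induction n with
  | zero =>
    obtain rfl : j = 0 := by omega
    exact ⟨MonoidHom.id _, by simp [MM]⟩
  | succ n ih =>
    rcases eq_or_ne j (n+1) with rfl | h
    · exact ⟨MonoidHom.id _, by simp [MM]⟩
    · obtain ⟨S, hS⟩ := ih (by omega) (by omega)
      refine ⟨(swp n).comp S, fun x => ?_⟩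
      rw [MM, if_pos (by omega), map_mul, MulAut.mul_apply, hρ n (by omega), kill_art, hS]
      rfl

lemma kill_AA (hρ : ∀ i, i + 1 < m → ρ (s i) = art i) (n : ℕ) (hn : n < m) (i : ℕ)
    (hi : i < n) (x : F) : kill n (ρ (AA s n i) x) = kill n x := by
  obtain ⟨S, hS⟩ := kill_MM hρ n hn (i+1) (by omega)
  obtain ⟨y, rfl⟩ := (ρ (MM s n (i+1))).surjective x
  rw [← MulAut.mul_apply, ← map_mul, AA, inv_mul_cancel_right, map_mul, map_mul, MulAut.mul_apply,
    MulAut.mul_apply, hS, hS, hρ i (by omega), kill_art_sq]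

lemma AA_self (hρ : ∀ i, i + 1 < m → ρ (s i) = art i) (n : ℕ) (hn : n < m) (i : ℕ)
    (hi : i < n) : ρ (AA s n i) (FreeGroup.of n) =
      (FreeGroup.of i * FreeGroup.of n)⁻¹ * FreeGroup.of n * (FreeGroup.of i * FreeGroup.of n) := by
  have h1 := rho_MM_self hρ n hn (i+1) (by omega)
  have h2 := rho_MM_lt hρ n hn i (i+1) (by omega)
  rw [← h1, ← MulAut.mul_apply, ← map_mul, AA, inv_mul_cancel_right, map_mul, map_mul,
    MulAut.mul_apply, MulAut.mul_apply, hρ i (by omega), art_succ]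
  conv_rhs => rw [← h2]
  simp only [map_mul, map_inv, art_self, art_succ]
  group

lemma kill_U (hρ : ∀ i, i + 1 < m → ρ (s i) = art i) (n : ℕ) (hn : n < m)
    (w : FreeGroup (Fin n)) : ∀ x, kill n (ρ (theta s n w) x) = kill n x := by
  induction w using FreeGroup.induction_on with
  | C1 => simp
  | of j =>
    intro x
    have e : theta s n (FreeGroup.of j) = AA s n j := by simp [theta]
    rw [e, kill_AA hρ n hn j j.2]
  | inv_of j ih =>
    intro x
    have := ih (ρ (theta s n (FreeGroup.of j)⁻¹) x)
    rw [← this, ← MulAut.mul_apply, ← map_mul, ← map_mul]; simp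
  | mul x y ihx ihy =>
    intro z
    rw [map_mul, map_mul, MulAut.mul_apply, ihx, ihy]

lemma U_spec (hρ : ∀ i, i + 1 < m → ρ (s i) = art i) (n : ℕ) (hn : n < m)
    (w : FreeGroup (Fin n)) : ∃ g : F, ρ (theta s n w) (FreeGroup.of n) = g⁻¹ * FreeGroup.of n * g ∧
      kill n g = FreeGroup.map (Fin.val) w := by
  induction w using FreeGroup.induction_on with
  | C1 => exact ⟨1, by simp, by simp⟩
  | of j =>
    have e : theta s n (FreeGroup.of j) = AA s n j := by simp [theta]
    refine ⟨FreeGroup.of j.val * FreeGroup.of n, ?_, ?_⟩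
    · rw [e, AA_self hρ n hn j j.2]
    · rw [map_mul, kill_self, kill_ne _ _ (by omega)]; simp
  | inv_of j ih =>
    obtain ⟨g, h1, h2⟩ := ih
    refine ⟨(ρ (theta s n (FreeGroup.of j)⁻¹) g)⁻¹, ?_, ?_⟩
    · have := congrArg (ρ (theta s n (FreeGroup.of j)⁻¹)) h1
      rw [← MulAut.mul_apply, ← map_mul, ← map_mul, inv_mul_cancel, map_one, map_one,
        MulAut.one_apply, map_mul, map_mul, map_inv] at this
      nth_rw 2 [this]
      group
    · rw [map_inv, kill_U hρ n hn, h2, map_inv]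
  | mul x y ihx ihy =>
    obtain ⟨g, h1, h2⟩ := ihx
    obtain ⟨g', h1', h2'⟩ := ihy
    refine ⟨g * ρ (theta s n x) g', ?_, ?_⟩
    · rw [map_mul, map_mul, MulAut.mul_apply, h1', map_mul, map_mul, h1, map_inv]; group
    · rw [map_mul, kill_U hρ n hn, h2, h2', map_mul]

lemma kill_H (hρ : ∀ i, i + 1 < m → ρ (s i) = art i) (n : ℕ) (hn : n < m) (b : G)
    (hb : b ∈ HH s n) : (∀ x, kill n (ρ b x) = ρ b (kill n x)) ∧
      ρ b (FreeGroup.of n) = FreeGroup.of n := by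
  unfold HH at hb
  induction hb using Subgroup.closure_induction with
  | one => simp
  | mem x hx =>
    obtain ⟨k, hk, rfl⟩ := hx
    rw [hρ k (by omega)]
    exact ⟨kill_art_far k n hk, art_ne _ _ (by omega) (by omega)⟩
  | mul x y _ _ ihx ihy =>
    simp only [map_mul, MulAut.mul_apply]
    refine ⟨fun z => by rw [ihx.1, ihy.1], by rw [ihy.2, ihx.2]⟩
  | inv x _ ih =>
    refine ⟨fun z => ?_, ?_⟩
    · have := ih.1 (ρ x⁻¹ z)
      rw [← MulAut.mul_apply, ← map_mul, mul_inv_cancel, map_one, MulAut.one_apply] at this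
      rw [this, ← MulAut.mul_apply, ← map_mul, inv_mul_cancel, map_one, MulAut.one_apply]
    · conv_lhs => rw [← ih.2]
      rw [← MulAut.mul_apply, ← map_mul, inv_mul_cancel, map_one, MulAut.one_apply]

theorem faithful (hs : IsBr s m) (hρ : ∀ i, i + 1 < m → ρ (s i) = art i) (n : ℕ) (hn : n ≤ m) :
    ∀ b ∈ HH s n, ρ b = 1 → b = 1 := by
  induction n with
  | zero =>
    intro b hb _
    have : HH s 0 = ⊥ := by
      unfold HH; rw [Subgroup.closure_eq_bot_iff]; rintro x ⟨k, hk, _⟩; omega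
    rw [this] at hb; exact Subgroup.mem_bot.1 hb
  | succ n ih =>
    intro b hb hb1
    obtain ⟨u, ⟨w, rfl⟩, h, hh, j, hj, rfl⟩ := decomp hs n (by omega) b hb
    obtain ⟨g, hg1, hg2⟩ := U_spec hρ n (by omega) w
    obtain ⟨k1, k2⟩ := kill_H hρ n (by omega) h hh
    have hj' : j = n := by
      have h0 := rho_MM_self hρ n (by omega) j hj
      have h3 := congrArg (fun f : MulAut F => f (FreeGroup.of j)) hb1
      simp only [map_mul, MulAut.mul_apply, MulAut.one_apply] at h3
      rw [h0, k2, hg1] at h3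
      apply (of_isConj _).symm
      exact isConj_iff.2 ⟨g⁻¹, by rw [← h3]; simp⟩
    subst hj'
    rw [MM_of_le s le_rfl, mul_one] at hb1 ⊢
    have hh1 : ρ h = 1 := by
      apply mulAut_ext
      intro i
      rcases eq_or_ne i j with rfl | hij
      · rw [k2]; rfl
      · have h3 := congrArg (fun f : MulAut F => kill j (f (FreeGroup.of i))) hb1
        simp only [map_mul, MulAut.mul_apply, MulAut.one_apply] at h3
        rw [kill_U hρ j (by omega), k1, kill_ne _ _ hij] at h3
        rw [h3]; rfl
    have := ih (by omega) h hh hh1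
    subst this
    rw [mul_one] at hb1 ⊢
    rw [hb1, MulAut.one_apply] at hg1
    have h4 := kill_eq_one_of_comm j g (by
      nth_rw 1 [hg1]; group)
    rw [hg2] at h4
    have h5 : w = 1 := by
      apply FreeGroup.map_injective (Fin.val_injective)
      rw [h4, map_one]
    rw [h5, map_one]

end faithful

section Magnus

abbrev VV := List ℕ → ℤ
abbrev EV := Module.End ℤ VV

/-- left multiplication by `X_i`, with `X_i² = 0`. -/
def NN (i : ℕ) : EV where
  toFun f l := match l with
    | [] => 0
    | j :: t => if j = i ∧ t.head? ≠ some i then f t else 0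
  map_add' f g := by
    funext l; cases l with
    | nil => simp
    | cons j t => simp only [Pi.add_apply]; split_ifs <;> simp
  map_smul' c f := by
    funext l; cases l with
    | nil => simp
    | cons j t => simp only [Pi.smul_apply, RingHom.id_apply]; split_ifs <;> simp

lemma NN_nil (i : ℕ) (f : VV) : NN i f [] = 0 := rfl
lemma NN_cons (i j : ℕ) (t : List ℕ) (f : VV) :
    NN i f (j :: t) = if j = i ∧ t.head? ≠ some i then f t else 0 := rfl

lemma NN_sq (i : ℕ) : NN i * NN i = 0 := by
  ext f l
  cases l with
  | nil => rfl
  | cons j t =>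
    change NN i (NN i f) (j :: t) = 0
    rw [NN_cons]
    split_ifs with h
    · cases t with
      | nil => rfl
      | cons k t =>
        rw [NN_cons, if_neg]
        rintro ⟨rfl, _⟩
        exact h.2 rfl
    · rfl

def uu (i : ℕ) : EVˣ where
  val := 1 + NN i
  inv := 1 - NN i
  val_inv := by have := NN_sq i; noncomm_ring; simp [this]
  inv_val := by have := NN_sq i; noncomm_ring; simp [this]

lemma uu_zpow (i : ℕ) (e : ℤ) : ((uu i ^ e : EVˣ) : EV) = 1 + e • NN i := by
  have hs := NN_sq i
  induction e using Int.induction_on with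
  | zero => simp
  | succ n ih =>
    rw [zpow_add_one, Units.val_mul, ih]
    change (1 + (n:ℤ) • NN i) * (1 + NN i) = _
    rw [add_mul, mul_add, mul_add, smul_mul_assoc, smul_mul_assoc, hs, add_smul]
    simp; abel
  | pred n ih =>
    rw [zpow_sub_one, Units.val_mul, ih]
    change (1 + (-(n:ℤ)) • NN i) * (1 - NN i) = _
    rw [add_mul, mul_sub, mul_sub, smul_mul_assoc, smul_mul_assoc, hs, sub_smul]
    simp; abel

def muG : F →* EVˣ := FreeGroup.lift uu

lemma unit_lift (i : ℕ) (x : FreeGroup Unit) (hx : x ≠ 1) :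
    ∃ e : ℤ, e ≠ 0 ∧ ((FreeGroup.lift (fun _ : Unit => uu i) x : EVˣ) : EV) = 1 + e • NN i := by
  have hx' : x = FreeGroup.of () ^ (FreeGroup.freeGroupUnitEquivInt x) :=
    (FreeGroup.freeGroupUnitEquivInt.symm_apply_apply x).symm
  generalize FreeGroup.freeGroupUnitEquivInt x = e at hx'
  subst hx'
  refine ⟨e, ?_, ?_⟩
  · rintro rfl; simp at hx
  · rw [map_zpow, FreeGroup.lift_apply_of, uu_zpow]

def dl : VV := fun l => if l = [] then 1 else 0

lemma word_aux (L : List (Σ _ : ℕ, FreeGroup Unit)) (h1 : ∀ l ∈ L, l.2 ≠ 1)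
    (h2 : L.IsChain (fun l l' => l.1 ≠ l'.1)) :
    ((L.map fun l => (FreeGroup.lift (fun _ : Unit => uu l.1) l.2 : EVˣ)).prod : EVˣ).val dl
      (L.map Sigma.fst) ≠ 0 ∧ ∀ t : List ℕ, L.length < t.length →
    ((L.map fun l => (FreeGroup.lift (fun _ : Unit => uu l.1) l.2 : EVˣ)).prod : EVˣ).val dl t = 0 := by
  induction L with
  | nil =>
    refine ⟨by simp [dl], fun t ht => ?_⟩
    have : t ≠ [] := by rintro rfl; simp at ht
    simp [dl, this]
  | cons a L ih =>
    obtain ⟨i, x⟩ := a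
    obtain ⟨ih1, ih2⟩ := ih (fun l hl => h1 l (List.mem_cons_of_mem _ hl)) h2.tail
    obtain ⟨e, he, hu⟩ := unit_lift i x (h1 ⟨i, x⟩ List.mem_cons_self)
    rw [List.map_cons, List.prod_cons, Units.val_mul, hu]
    generalize ((L.map fun l => (FreeGroup.lift (fun _ : Unit => uu l.1) l.2 : EVˣ)).prod : EVˣ).val
      = T at *
    have hT : ∀ t, ((1 + e • NN i) * T) dl t = T dl t + e * NN i (T dl) t := by
      intro t; simp [Module.End.mul_apply, LinearMap.add_apply]
    refine ⟨?_, fun t ht => ?_⟩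
    · rw [hT, List.map_cons, ih2 _ (by simp), NN_cons, if_pos]
      · simpa using ⟨he, ih1⟩
      · refine ⟨rfl, ?_⟩
        cases L with
        | nil => simp
        | cons b L =>
          have := h2.rel
          simpa using Ne.symm this
    · simp only [List.length_cons] at ht
      rw [hT, ih2 t (by omega)]
      cases t with
      | nil => simp at ht
      | cons j t =>
        simp only [List.length_cons] at ht
        rw [NN_cons, ih2 t (by omega)]
        simp

lemma muG_injective (g : F) (hg : muG g = 1) : g = 1 := by
  have e : muG = (Monoid.CoprodI.lift fun i => FreeGroup.lift fun _ => uu i).comp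
        (@freeGroupEquivCoprodI ℕ).toMonoidHom := by
    ext i
    simp [muG]
  rw [e] at hg
  obtain ⟨w, hw⟩ := (Monoid.CoprodI.Word.equiv (M := fun _ : ℕ => FreeGroup Unit)).symm.surjective
    (freeGroupEquivCoprodI g)
  change Monoid.CoprodI.Word.prod w = _ at hw
  simp only [MonoidHom.comp_apply, MulEquiv.toMonoidHom_eq_coe, MonoidHom.coe_coe] at hg
  rw [← hw, Monoid.CoprodI.Word.prod, map_list_prod, List.map_map] at hg
  obtain ⟨a1, a2⟩ := word_aux w.toList w.ne_one w.chain_ne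
  have e2 : (w.toList.map fun l => (FreeGroup.lift (fun _ : Unit => uu l.1) l.2 : EVˣ)).prod = 1 := by
    rw [← hg]
    congr 1
  rw [e2] at a1
  have hnil : w.toList = [] := by
    by_contra hne
    apply a1
    simp [dl, hne]
  have : freeGroupEquivCoprodI g = 1 := by
    rw [← hw, Monoid.CoprodI.Word.prod, hnil]; rfl
  exact (MulEquiv.map_eq_one_iff _).1 this

/-! ### group ring and filtration -/

abbrev AF := MonoidAlgebra ℤ F

noncomputable def ogr (g : F) : AF := MonoidAlgebra.of ℤ F g
lemma ogr_mul (g h : F) : ogr (g * h) = ogr g * ogr h := map_mul _ _ _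
lemma ogr_one : ogr 1 = 1 := map_one _

noncomputable def II : Submodule ℤ AF := Submodule.span ℤ {x | ∃ g : F, x = ogr g - 1}

lemma ogr_mem (g : F) : ogr g - 1 ∈ II := Submodule.subset_span ⟨g, rfl⟩

lemma II_sq_le : II * II ≤ II := by
  unfold II
  rw [Submodule.span_mul_span, Submodule.span_le]
  rintro _ ⟨_, ⟨g, rfl⟩, _, ⟨h, rfl⟩, rfl⟩
  have : (ogr g - 1) * (ogr h - 1) = (ogr (g * h) - 1) - (ogr g - 1) - (ogr h - 1) := by
    rw [ogr_mul]; noncomm_ring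
  simp only [this]
  exact sub_mem (sub_mem (ogr_mem _) (ogr_mem _)) (ogr_mem _)

lemma II_pow_succ_le (k : ℕ) : II ^ (k+2) ≤ II ^ (k+1) := by
  rw [pow_succ, pow_succ, mul_assoc]
  exact mul_le_mul' le_rfl II_sq_le

lemma II_mul_ogr (k : ℕ) (x : AF) (hx : x ∈ II ^ (k+1)) (g : F) : x * ogr g ∈ II ^ (k+1) := by
  have : x * ogr g = x + x * (ogr g - 1) := by noncomm_ring
  rw [this]
  refine add_mem hx (II_pow_succ_le k ?_)
  rw [pow_succ (n := k+1)]
  exact Submodule.mul_mem_mul hx (ogr_mem g)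

lemma II_ogr_mul (k : ℕ) (x : AF) (hx : x ∈ II ^ (k+1)) (g : F) : ogr g * x ∈ II ^ (k+1) := by
  have : ogr g * x = x + (ogr g - 1) * x := by noncomm_ring
  rw [this]
  refine add_mem hx (II_pow_succ_le k ?_)
  rw [pow_succ' (n := k+1)]
  exact Submodule.mul_mem_mul (ogr_mem g) hx

noncomputable def mapA (φ : MulAut F) : AF →ₐ[ℤ] AF :=
  MonoidAlgebra.lift ℤ AF F ((MonoidAlgebra.of ℤ F).comp φ.toMonoidHom)

lemma mapA_ogr (φ : MulAut F) (g : F) : mapA φ (ogr g) = ogr (φ g) := by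
  unfold mapA ogr
  rw [MonoidAlgebra.lift_of]; rfl

/-- automorphisms sending each generator to a conjugate of itself -/
def IsPure (φ : MulAut F) : Prop := ∀ j, IsConj (FreeGroup.of j) (φ (FreeGroup.of j))

lemma pure_ogr {φ : MulAut F} (h : IsPure φ) (g : F) : ogr (φ g) - ogr g ∈ II ^ 2 := by
  induction g using FreeGroup.induction_on with
  | C1 => simp
  | of j =>
    obtain ⟨c, hc⟩ := isConj_iff.1 (h j)
    rw [← hc]
    generalize FreeGroup.of j = x
    have : ogr (c * x * c⁻¹) - ogr x =
        ((ogr c - 1) * (ogr x - 1) - (ogr x - 1) * (ogr c - 1)) * ogr c⁻¹ := by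
      have e : (1 : AF) = ogr c * ogr c⁻¹ := by rw [← ogr_mul, mul_inv_cancel, ogr_one]
      have e2 : ogr x = ogr x * ogr c * ogr c⁻¹ := by rw [mul_assoc, ← e, mul_one]
      rw [ogr_mul, ogr_mul]
      conv_lhs => rw [e2]
      noncomm_ring
      simp [← ogr_mul]
      abel
    rw [this]
    refine II_mul_ogr 1 _ ?_ _
    rw [pow_two]
    exact sub_mem (Submodule.mul_mem_mul (ogr_mem _) (ogr_mem _))
      (Submodule.mul_mem_mul (ogr_mem _) (ogr_mem _))
  | inv_of j ih =>
    generalize FreeGroup.of j = x at *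
    rw [map_inv]
    have : ogr (φ x)⁻¹ - ogr x⁻¹ = - (ogr (φ x)⁻¹ * (ogr (φ x) - ogr x) * ogr x⁻¹) := by
      rw [mul_sub, sub_mul, ← ogr_mul, ← ogr_mul, ← ogr_mul, ← ogr_mul]; simp
    rw [this]
    exact neg_mem (II_mul_ogr 1 _ (II_ogr_mul 1 _ ih _) _)
  | mul x y ihx ihy =>
    have : ogr (φ (x * y)) - ogr (x * y) =
        (ogr (φ x) - ogr x) * ogr (φ y) + ogr x * (ogr (φ y) - ogr y) := by
      rw [map_mul, ogr_mul, ogr_mul]; noncomm_ring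
    rw [this]
    exact add_mem (II_mul_ogr 1 _ ihx _) (II_ogr_mul 1 _ ihy _)

lemma mapA_mem (φ : MulAut F) (x : AF) (hx : x ∈ II) : mapA φ x ∈ II := by
  have : II ≤ II.comap (mapA φ).toLinearMap := by
    conv_lhs => unfold II
    rw [Submodule.span_le]
    rintro _ ⟨g, rfl⟩
    simp [mapA_ogr, ogr_mem]
  exact this hx

lemma mapA_sub_mem_one {φ : MulAut F} (h : IsPure φ) (x : AF) (hx : x ∈ II) :
    mapA φ x - x ∈ II ^ 2 := by
  have : II ≤ (II ^ 2).comap ((mapA φ).toLinearMap - LinearMap.id) := by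
    conv_lhs => unfold II
    rw [Submodule.span_le]
    rintro _ ⟨g, rfl⟩
    simpa [mapA_ogr] using pure_ogr h g
  exact this hx

lemma mapA_sub_mem {φ : MulAut F} (h : IsPure φ) (k : ℕ) : ∀ (x : AF) (_ : x ∈ II ^ (k+1)),
    mapA φ x - x ∈ II ^ (k+2) := by
  induction k with
  | zero => intro x hx; exact mapA_sub_mem_one h x (by simpa using hx)
  | succ k ih =>
    have : II ^ (k+1+1) ≤ (II ^ (k+1+2)).comap ((mapA φ).toLinearMap - LinearMap.id) := by
      conv_lhs => rw [pow_succ]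
      rw [Submodule.mul_le]
      intro a ha b hb
      have e : ((mapA φ).toLinearMap - LinearMap.id : AF →ₗ[ℤ] AF) (a * b) =
          (mapA φ a - a) * mapA φ b + a * (mapA φ b - b) := by
        simp; noncomm_ring
      rw [Submodule.mem_comap, e]
      refine add_mem ?_ ?_
      · rw [show k+1+2 = (k+2)+1 from rfl, pow_succ]
        exact Submodule.mul_mem_mul (ih a ha) (mapA_mem φ b hb)
      · rw [show k+1+2 = (k+1)+2 from rfl, pow_add]
        exact Submodule.mul_mem_mul ha (mapA_sub_mem_one h b hb)
    intro x hx
    exact this hx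

/-- saturated filtration -/
def JJ (k : ℕ) : Submodule ℤ AF where
  carrier := {a | ∃ N : ℤ, N ≠ 0 ∧ N • a ∈ II ^ (k+1)}
  zero_mem' := ⟨1, by simp, by simp⟩
  add_mem' := by
    rintro a b ⟨N, hN, ha⟩ ⟨M, hM, hb⟩
    refine ⟨N * M, mul_ne_zero hN hM, ?_⟩
    rw [smul_add]
    refine add_mem ?_ ?_
    · rw [mul_comm, mul_smul]; exact Submodule.smul_mem _ _ ha
    · rw [mul_smul]; exact Submodule.smul_mem _ _ hb
  smul_mem' := by
    rintro c a ⟨N, hN, ha⟩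
    exact ⟨N, hN, by rw [smul_comm]; exact Submodule.smul_mem _ _ ha⟩

lemma JJ_succ_le (k : ℕ) : JJ (k+1) ≤ JJ k := by
  rintro a ⟨N, hN, ha⟩
  exact ⟨N, hN, II_pow_succ_le k ha⟩

lemma JJ_sat (k : ℕ) (N : ℤ) (hN : N ≠ 0) (a : AF) (h : N • a ∈ JJ k) : a ∈ JJ k := by
  obtain ⟨M, hM, hh⟩ := h
  exact ⟨M * N, mul_ne_zero hM hN, by rw [mul_smul]; exact hh⟩

lemma mapA_JJ {φ : MulAut F} (h : IsPure φ) (k : ℕ) (x : AF) (hx : x ∈ JJ k) :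
    mapA φ x - x ∈ JJ (k+1) := by
  obtain ⟨N, hN, hh⟩ := hx
  refine ⟨N, hN, ?_⟩
  rw [smul_sub, ← map_smul]
  exact mapA_sub_mem h k _ hh

lemma roots_filtered (J : ℕ → Submodule ℤ AF) (hJ : ∀ k, J (k+1) ≤ J k)
    (sat : ∀ k (N : ℤ), N ≠ 0 → ∀ a, N • a ∈ J k → a ∈ J k) (P Q : Module.End ℤ AF)
    (hP : ∀ k, ∀ x ∈ J k, P x - x ∈ J (k+1)) (hQ : ∀ k, ∀ x ∈ J k, Q x - x ∈ J (k+1))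
    (N : ℕ) (hN : 0 < N) (h : P ^ N = Q ^ N) (d : ℕ) : ∀ k, ∀ x ∈ J k, P x - Q x ∈ J (k + d) := by
  have hP' : ∀ k, ∀ x ∈ J k, P x ∈ J k := fun k x hx => by
    have := add_mem (hJ k (hP k x hx)) hx
    simpa using this
  have hQn : ∀ n k, ∀ x ∈ J k, (Q ^ n) x - x ∈ J (k+1) := by
    intro n
    induction n with
    | zero => intro k x _; simp
    | succ n ih =>
      intro k x hx
      have e : (Q ^ (n+1)) x - x = (Q ((Q^n) x) - (Q^n) x) + ((Q ^ n) x - x) := by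
        rw [pow_succ', Module.End.mul_apply]; abel
      rw [e]
      refine add_mem (hQ k _ ?_) (ih k x hx)
      have := add_mem (hJ k (ih k x hx)) hx
      simpa using this
  induction d with
  | zero =>
    intro k x hx
    have := sub_mem (hJ k (hP k x hx)) (hJ k (hQ k x hx))
    simpa using this
  | succ d ih =>
    intro k x hx
    have key : ∀ n : ℕ, (P ^ n) x - (Q ^ n) x - (n : ℤ) • (P x - Q x) ∈ J (k + d + 1) := by
      intro n
      induction n with
      | zero => simp
      | succ n ihn =>
        have e : (P ^ (n+1)) x - (Q ^ (n+1)) x - ((n+1 : ℕ) : ℤ) • (P x - Q x) =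
            P ((P ^ n) x - (Q ^ n) x - (n : ℤ) • (P x - Q x)) +
            (P ((n:ℤ) • (P x - Q x)) - (n:ℤ) • (P x - Q x)) +
            (P ((Q ^ n) x - x) - Q ((Q ^ n) x - x)) := by
          rw [pow_succ', pow_succ', Module.End.mul_apply, Module.End.mul_apply]
          push_cast
          simp only [map_sub, map_smul, add_smul, one_smul]
          abel
        rw [e]
        refine add_mem (add_mem (hP' _ _ ihn) (hP _ _ ?_)) ?_
        · exact Submodule.smul_mem _ _ (ih k x hx)
        · have := ih (k+1) _ (hQn n k x hx)
          rwa [show k + d + 1 = k + 1 + d by omega]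
    have := key N
    rw [h, sub_self, zero_sub] at this
    refine sat _ (N : ℤ) (by exact_mod_cast hN.ne') _ ?_
    have := neg_mem this
    rwa [neg_neg] at this

noncomputable def muA : AF →ₐ[ℤ] EV := MonoidAlgebra.lift ℤ EV F ((Units.coeHom EV).comp muG)

lemma muA_ogr (g : F) : muA (ogr g) = (muG g : EV) := by
  unfold muA ogr
  rw [MonoidAlgebra.lift_of]; rfl

def RR (k : ℕ) : Submodule ℤ EV where
  carrier := {T | ∀ (f : VV) (d : ℕ), (∀ l, l.length < d → f l = 0) →
    ∀ l : List ℕ, l.length < d + k → T f l = 0}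
  zero_mem' := by intro f d _ l _; rfl
  add_mem' := by
    intro S T hS hT f d hf l hl
    rw [LinearMap.add_apply, Pi.add_apply, hS f d hf l hl, hT f d hf l hl, add_zero]
  smul_mem' := by
    intro c T hT f d hf l hl
    rw [LinearMap.smul_apply, Pi.smul_apply, hT f d hf l hl, smul_zero]

lemma RR_mul {j k : ℕ} {S T : EV} (hS : S ∈ RR j) (hT : T ∈ RR k) : S * T ∈ RR (j + k) := by
  intro f d hf l hl
  exact hS (T f) (d + k) (hT f d hf) l (by omega)

lemma RR_one : (1 : EV) ∈ RR 0 := fun _ _ hf l hl => hf l hl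

lemma RR_anti {k : ℕ} : RR (k+1) ≤ RR k := fun T hT f d hf l hl => hT f d hf l (by omega)

lemma NN_mem (i : ℕ) : NN i ∈ RR 1 := by
  intro f d hf l hl
  cases l with
  | nil => rfl
  | cons j t =>
    simp only [List.length_cons] at hl
    rw [NN_cons, hf t (by omega)]; simp

lemma muG_mem (g : F) : (muG g : EV) - 1 ∈ RR 1 := by
  have aux : ∀ T : EV, T - 1 ∈ RR 1 → T ∈ RR 0 := fun T hT => by
    have := add_mem (RR_anti hT) RR_one
    simpa using this
  induction g using FreeGroup.induction_on with
  | C1 => simp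
  | of j => simpa [muG, uu] using NN_mem j
  | inv_of j ih => simpa [muG, uu] using NN_mem j
  | mul x y ihx ihy =>
    have : ((muG (x * y) : EVˣ) : EV) - 1 = ((muG x : EV) - 1) * (muG y : EV) + ((muG y : EV) - 1) := by
      rw [map_mul, Units.val_mul]; noncomm_ring
    rw [this]
    exact add_mem (RR_mul ihx (aux _ ihy)) ihy

lemma muA_II (x : AF) (hx : x ∈ II) : muA x ∈ RR 1 := by
  have : II ≤ (RR 1).comap muA.toLinearMap := by
    unfold II
    rw [Submodule.span_le]
    rintro _ ⟨g, rfl⟩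
    simpa [muA_ogr] using muG_mem g
  exact this hx

lemma muA_II_pow (k : ℕ) : ∀ (x : AF) (_ : x ∈ II ^ k), muA x ∈ RR k := by
  induction k with
  | zero =>
    intro x hx
    rw [pow_zero, Submodule.mem_one] at hx
    obtain ⟨c, rfl⟩ := hx
    rw [AlgHom.commutes, Algebra.algebraMap_eq_smul_one]
    exact Submodule.smul_mem _ _ RR_one
  | succ k ih =>
    have : II ^ (k+1) ≤ (RR (k+1)).comap muA.toLinearMap := by
      rw [pow_succ, Submodule.mul_le]
      intro a ha b hb
      have : muA (a * b) ∈ RR (k+1) := by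
        rw [map_mul]
        exact RR_mul (ih a ha) (muA_II b hb)
      exact this
    intro x hx
    exact this hx

lemma muA_JJ (k : ℕ) (x : AF) (hx : x ∈ JJ k) : muA x ∈ RR (k+1) := by
  obtain ⟨N, hN, hh⟩ := hx
  have := muA_II_pow _ _ hh
  rw [map_smul] at this
  intro f d hf l hl
  have h2 := this f d hf l hl
  rw [LinearMap.smul_apply, Pi.smul_apply, smul_eq_mul] at h2
  exact (mul_eq_zero.1 h2).resolve_left hN

lemma mapA_pow (φ : MulAut F) (N : ℕ) (g : F) :
    (((mapA φ).toLinearMap : Module.End ℤ AF) ^ N) (ogr g) = ogr ((φ ^ N) g) := by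
  induction N with
  | zero => simp
  | succ N ih =>
    rw [pow_succ', Module.End.mul_apply, ih, pow_succ', MulAut.mul_apply]
    exact mapA_ogr _ _

theorem unique_roots (φ ψ : MulAut F) (hφ : IsPure φ) (hψ : IsPure ψ) (N : ℕ) (hN : 0 < N)
    (h : φ ^ N = ψ ^ N) : φ = ψ := by
  have hpow : ((mapA φ).toLinearMap : Module.End ℤ AF) ^ N = (mapA ψ).toLinearMap ^ N := by
    apply MonoidAlgebra.lhom_ext'
    intro g
    apply LinearMap.ext_ring
    have e1 := mapA_pow φ N g
    have e2 := mapA_pow ψ N g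
    rw [h, ← e2] at e1
    exact e1
  have k1 : ∀ k, ∀ x ∈ JJ k, ((mapA φ).toLinearMap : Module.End ℤ AF) x - x ∈ JJ (k+1) :=
    fun k x hx => mapA_JJ hφ k x hx
  have k2 : ∀ k, ∀ x ∈ JJ k, ((mapA ψ).toLinearMap : Module.End ℤ AF) x - x ∈ JJ (k+1) :=
    fun k x hx => mapA_JJ hψ k x hx
  have key := roots_filtered JJ JJ_succ_le JJ_sat ((mapA φ).toLinearMap) ((mapA ψ).toLinearMap)
    k1 k2 N hN hpow
  ext g
  have h0 : ogr g - 1 ∈ JJ 0 := ⟨1, one_ne_zero, by simpa using ogr_mem g⟩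
  have h1 : ∀ d, ogr (φ g) - ogr (ψ g) ∈ JJ d := by
    intro d
    have := key d 0 _ h0
    simpa [mapA_ogr] using this
  have h2 : muA (ogr (φ g) - ogr (ψ g)) = 0 := by
    ext f l
    exact muA_JJ _ _ (h1 l.length) f 0 (by simp) l (by omega)
  rw [map_sub, muA_ogr, muA_ogr, sub_eq_zero] at h2
  have h3 : muG (φ g) = muG (ψ g) := Units.ext h2
  have h4 := muG_injective (φ g * (ψ g)⁻¹) (by rw [map_mul, map_inv, h3, mul_inv_cancel])
  exact mul_inv_eq_one.1 h4

end Magnus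

section final

lemma orderOf_perm_le {m : ℕ} (hm : 4 ≤ m) (σ : Equiv.Perm (Fin m)) :
    orderOf σ ≤ (m - 1).factorial := by
  have hsum : σ.cycleType.sum ≤ m := by
    rw [Equiv.Perm.sum_cycleType]
    simpa using Finset.card_le_univ σ.support
  rw [← Equiv.Perm.lcm_cycleType]
  by_cases h : m ∈ σ.cycleType
  · obtain ⟨r, hr⟩ := Multiset.exists_cons_of_mem h
    have hr0 : r = 0 := by
      rw [hr, Multiset.sum_cons] at hsum
      apply Multiset.eq_zero_of_forall_notMem
      intro a ha
      have h2 : 2 ≤ a := Equiv.Perm.two_le_of_mem_cycleType (σ := σ)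
        (by rw [hr]; exact Multiset.mem_cons_of_mem ha)
      have := Multiset.le_sum_of_mem ha
      omega
    rw [hr, hr0]
    obtain ⟨k, rfl⟩ : ∃ k, m = k + 4 := ⟨m - 4, by omega⟩
    have e : (k + 4 - 1).factorial = (k + 3) * ((k + 2) * (k+1).factorial) := by
      rw [show k + 4 - 1 = k + 2 + 1 by omega, Nat.factorial_succ, Nat.factorial_succ]
    have := Nat.factorial_pos (k+1)
    rw [e]
    simp
    nlinarith [Nat.mul_le_mul (le_refl ((k+3)*(k+2))) this]
  · apply Nat.le_of_dvd (Nat.factorial_pos _)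
    apply Multiset.lcm_dvd.2
    intro a ha
    have h1 := Multiset.le_sum_of_mem ha
    have h2 : a ≠ m := by rintro rfl; exact h ha
    have h3 := Equiv.Perm.two_le_of_mem_cycleType ha
    exact Nat.dvd_factorial (by omega) (by omega)

variable (m : ℕ)

def sg (i : ℕ) : BraidGroup m :=
  if h : i < m - 1 then PresentedGroup.of ⟨i, h⟩ else 1

lemma sg_isBr : IsBr (sg m) m where
  comm i j hij hj := by
    have hi' : i < m - 1 := by omega
    have hj' : j < m - 1 := by omega
    have := PresentedGroup.one_of_mem (rels := braidRels m)
      (Or.inl ⟨⟨i, hi'⟩, ⟨j, hj'⟩, Or.inl hij, rfl⟩)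
    simp only [map_mul, map_inv] at this
    simp only [sg, hi', hj', dif_pos]
    exact mul_inv_eq_one.1 this
  braid i hi := by
    have hi' : i < m - 1 := by omega
    have hj' : i + 1 < m - 1 := by omega
    have := PresentedGroup.one_of_mem (rels := braidRels m)
      (Or.inr ⟨⟨i, hi'⟩, ⟨i+1, hj'⟩, Or.inl rfl, rfl⟩)
    simp only [map_mul, map_inv] at this
    simp only [sg, hi', hj', dif_pos]
    exact mul_inv_eq_one.1 this

def rhoB : BraidGroup m →* MulAut F :=
  PresentedGroup.toGroup (f := fun i : Fin (m-1) => art i.val) (by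
    rintro r (⟨i, j, h, rfl⟩ | ⟨i, j, h, rfl⟩)
    · simp only [map_mul, map_inv, FreeGroup.lift_apply_of]
      rw [mul_inv_eq_one]
      rcases h with h | h
      · exact art_comm _ _ h
      · exact (art_comm _ _ h).symm
    · simp only [map_mul, map_inv, FreeGroup.lift_apply_of]
      rw [mul_inv_eq_one]
      rcases h with h | h
      · rw [← h]; exact art_braid _
      · rw [← h]; exact (art_braid _).symm)

def swB (i : Fin (m-1)) : Equiv.Perm (Fin m) :=
  Equiv.swap ⟨i.val, by omega⟩ ⟨i.val + 1, by omega⟩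

def piB : BraidGroup m →* Equiv.Perm (Fin m) :=
  PresentedGroup.toGroup (f := swB m) (by
    rintro r (⟨i, j, h, rfl⟩ | ⟨i, j, h, rfl⟩)
    · simp only [map_mul, map_inv, FreeGroup.lift_apply_of]
      rw [mul_inv_eq_one]
      ext k
      simp only [swB, Equiv.Perm.mul_apply, Equiv.swap_apply_def]
      grind
    · simp only [map_mul, map_inv, FreeGroup.lift_apply_of]
      rw [mul_inv_eq_one]
      ext k
      simp only [swB, Equiv.Perm.mul_apply, Equiv.swap_apply_def]
      grind)

lemma rhoB_sg (i : ℕ) (hi : i + 1 < m) : rhoB m (sg m i) = art i := by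
  have hi' : i < m - 1 := by omega
  simp only [sg, hi', dif_pos, rhoB]
  exact PresentedGroup.toGroup.of _

lemma HH_top : HH (sg m) m = ⊤ := by
  rw [eq_top_iff, ← PresentedGroup.closure_range_of, Subgroup.closure_le]
  rintro _ ⟨i, rfl⟩
  have : PresentedGroup.of i = sg m i.val := by simp [sg]
  rw [this]
  exact s_mem (by omega)

lemma rhoB_injective : Function.Injective (rhoB m) := by
  rw [injective_iff_map_eq_one]
  intro b hb
  exact faithful (sg_isBr m) (rhoB_sg m) m le_rfl b (by rw [HH_top]; trivial) hb

lemma rho_pi (b : BraidGroup m) :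
    (∀ j : Fin m, IsConj (FreeGroup.of (piB m b j).val) (rhoB m b (FreeGroup.of j.val))) ∧
    ∀ j, m ≤ j → rhoB m b (FreeGroup.of j) = FreeGroup.of j := by
  have hb : b ∈ Subgroup.closure (Set.range (PresentedGroup.of (rels := braidRels m))) := by
    rw [PresentedGroup.closure_range_of]; trivial
  induction hb using Subgroup.closure_induction with
  | one =>
    refine ⟨fun j => ?_, fun j _ => by simp⟩
    rw [map_one, map_one]
    exact IsConj.refl _
  | mem x hx =>
    obtain ⟨i, rfl⟩ := hx
    have e1 : rhoB m (PresentedGroup.of i) = art i.val := PresentedGroup.toGroup.of _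
    have e2 : piB m (PresentedGroup.of i) = swB m i := PresentedGroup.toGroup.of _
    rw [e1, e2]
    refine ⟨fun j => ?_, fun j hj => art_ne _ _ (by omega) (by omega)⟩
    by_cases h1 : j.val = i.val
    · have : swB m i j = ⟨i.val + 1, by omega⟩ := by
        simp [swB, Equiv.swap_apply_def, Fin.ext_iff, h1]
      rw [this, h1, art_self]
    by_cases h2 : j.val = i.val + 1
    · have : swB m i j = ⟨i.val, by omega⟩ := by
        simp [swB, Equiv.swap_apply_def, Fin.ext_iff, h2]
      rw [this, h2, art_succ]
      exact isConj_iff.2 ⟨(FreeGroup.of (i.val+1))⁻¹, by simp⟩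
    · have : swB m i j = j := by
        simp [swB, Equiv.swap_apply_def, Fin.ext_iff, h1, h2]
      rw [this, art_ne _ _ h1 h2]
  | mul x y _ _ ihx ihy =>
    refine ⟨fun j => ?_, fun j hj => ?_⟩
    · rw [map_mul, map_mul, Equiv.Perm.mul_apply, MulAut.mul_apply]
      exact (ihx.1 _).trans ((rhoB m x).toMonoidHom.map_isConj (ihy.1 j))
    · rw [map_mul, MulAut.mul_apply, ihy.2 j hj, ihx.2 j hj]
  | inv x _ ih =>
    have e : ∀ y, rhoB m x⁻¹ (rhoB m x y) = y := fun y => by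
      rw [← MulAut.mul_apply, ← map_mul, inv_mul_cancel, map_one, MulAut.one_apply]
    refine ⟨fun j => ?_, fun j hj => ?_⟩
    · have := (rhoB m x⁻¹).toMonoidHom.map_isConj (ih.1 (piB m x⁻¹ j))
      rw [← Equiv.Perm.mul_apply, ← map_mul, mul_inv_cancel, map_one, Equiv.Perm.one_apply] at this
      simp only [MulEquiv.toMonoidHom_eq_coe, MonoidHom.coe_coe] at this
      rw [e] at this
      exact this.symm
    · conv_lhs => rw [← ih.2 j hj]
      rw [e]

lemma isPure_of_pi (b : BraidGroup m) (hb : piB m b = 1) : IsPure (rhoB m b) := by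
  intro j
  obtain ⟨h1, h2⟩ := rho_pi m b
  by_cases hj : j < m
  · have := h1 ⟨j, hj⟩
    rw [hb] at this
    exact this
  · rw [h2 j (by omega)]

/-- The key algebraic fact. -/
theorem commute_pow (a c : BraidGroup m) (N : ℕ) (hN : 0 < N) (h : Commute a (c ^ N)) :
    Commute a (c ^ orderOf (piB m c)) := by
  set k := orderOf (piB m c)
  have hp : piB m (c ^ k) = 1 := by rw [map_pow, pow_orderOf_eq_one]
  have hq : piB m (a * c ^ k * a⁻¹) = 1 := by rw [map_mul, map_mul, hp, map_inv]; simp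
  have key : rhoB m (a * c ^ k * a⁻¹) = rhoB m (c ^ k) := by
    apply unique_roots _ _ (isPure_of_pi m _ hq) (isPure_of_pi m _ hp) N hN
    rw [← map_pow, ← map_pow, conj_pow, ← pow_mul, mul_comm k N, pow_mul]
    have := h.pow_right k
    rw [this.eq, mul_inv_cancel_right]
  exact mul_inv_eq_iff_eq_mul.1 (rhoB_injective m key)

end final

section orbit

variable {G : Type*} [Group G]

def TT : Equiv.Perm (Fin 2 → G) := hEquiv (n := 2) ⟨0, by decide⟩

lemma TT_sq (s : Fin 2 → G) : TT (TT s) = fun i => (s 0 * s 1)⁻¹ * s i * (s 0 * s 1) := by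
  funext i
  fin_cases i
  · simp [TT, hEquiv, mul_assoc]
  · simp [TT, hEquiv, mul_assoc]

lemma TT_pow (s : Fin 2 → G) (k : ℕ) :
    (TT ^ (2 * k)) s = fun i => ((s 0 * s 1) ^ k)⁻¹ * s i * (s 0 * s 1) ^ k := by
  induction k with
  | zero => simp
  | succ k ih =>
    rw [show 2 * (k+1) = 1 + (1 + 2 * k) by ring, pow_add, pow_add, Equiv.Perm.mul_apply,
      Equiv.Perm.mul_apply, ih, pow_one, TT_sq]
    have e : (fun i => ((s 0 * s 1) ^ k)⁻¹ * s i * (s 0 * s 1) ^ k) 0 *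
      (fun i => ((s 0 * s 1) ^ k)⁻¹ * s i * (s 0 * s 1) ^ k) 1 = s 0 * s 1 := by
      calc _ = ((s 0 * s 1) ^ k)⁻¹ * ((s 0 * s 1) * (s 0 * s 1) ^ k) := by
            beta_reduce
            generalize (s 0 * s 1) ^ k = x
            group
        _ = _ := by rw [← pow_succ', pow_succ, inv_mul_cancel_left]
    rw [e]
    funext i
    rw [pow_succ]
    group

lemma act_eq (w : FreeGroup (Fin (2 - 1))) : ∃ z : ℤ, ∀ s : Fin 2 → G,
    hurwitzAct w s = (TT ^ z) s := by
  have : ∃ z : ℤ, FreeGroup.lift (fun i => MulOpposite.op (hEquiv (G := G) (n := 2) i)) w =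
      MulOpposite.op (TT ^ z) := by
    induction w using FreeGroup.induction_on with
    | C1 => exact ⟨0, by simp⟩
    | of j =>
      refine ⟨1, ?_⟩
      rw [FreeGroup.lift_apply_of, zpow_one, TT]
      congr
      exact Subsingleton.elim (α := Fin 1) _ _
    | inv_of j ih =>
      obtain ⟨z, hz⟩ := ih
      exact ⟨-z, by rw [map_inv, hz, zpow_neg]; rfl⟩
    | mul x y ihx ihy =>
      obtain ⟨z, hz⟩ := ihx
      obtain ⟨z', hz'⟩ := ihy
      exact ⟨z' + z, by rw [map_mul, hz, hz', zpow_add]; rfl⟩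
  obtain ⟨z, hz⟩ := this
  exact ⟨z, fun s => by rw [hurwitzAct, hz]; rfl⟩

lemma pow_mem_orbit (s : Fin 2 → G) (n : ℕ) : (TT ^ n) s ∈ hurwitzOrbit s := by
  refine ⟨FreeGroup.of ⟨0, by decide⟩ ^ n, ?_⟩
  rw [hurwitzAct, map_pow, FreeGroup.lift_apply_of]
  rfl

lemma exists_pow_commute (s : Fin 2 → G) (h : (hurwitzOrbit s).Finite) :
    ∃ N : ℕ, 0 < N ∧ ∀ i, Commute (s i) ((s 0 * s 1) ^ N) := by
  have key : ∃ a b : ℕ, a < b ∧ (TT ^ (2 * a)) s = (TT ^ (2 * b)) s := by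
    have : ¬ Function.Injective (fun n : ℕ => (TT ^ (2 * n)) s) := by
      intro hinj
      exact Set.infinite_range_of_injective hinj
        (h.subset (by rintro _ ⟨n, rfl⟩; exact pow_mem_orbit s _))
    simp only [Function.Injective, not_forall] at this
    obtain ⟨a, b, hab, hne⟩ := this
    rcases lt_or_gt_of_ne hne with h | h
    · exact ⟨a, b, h, hab⟩
    · exact ⟨b, a, h, hab.symm⟩
  obtain ⟨a, b, hab, he⟩ := key
  refine ⟨b - a, by omega, fun i => ?_⟩
  obtain ⟨d, rfl⟩ : ∃ d, b = a + d := ⟨b - a, by omega⟩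
  rw [Nat.add_sub_cancel_left]
  have : (TT ^ (2 * d)) s = s := by
    apply (TT ^ (2 * a)).injective
    rw [← Equiv.Perm.mul_apply, ← pow_add, ← mul_add, ← he]
  rw [TT_pow] at this
  have h2 := congrFun this i
  rw [mul_assoc, inv_mul_eq_iff_eq_mul] at h2
  exact h2

lemma orbit_card (s : Fin 2 → G) (k : ℕ) (hk : 0 < k) (h : ∀ i, Commute (s i) ((s 0 * s 1) ^ k)) :
    (hurwitzOrbit s).ncard ≤ 2 * k := by
  have hfix : (TT ^ (2 * k)) s = s := by
    rw [TT_pow]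
    funext i
    rw [mul_assoc, (h i).eq, inv_mul_cancel_left]
  have hsub : hurwitzOrbit s ⊆ ((fun n : ℕ => (TT ^ n) s) '' (Finset.range (2 * k) : Set ℕ)) := by
    rintro _ ⟨w, rfl⟩
    obtain ⟨z, hz⟩ := act_eq (G := G) w
    rw [hz]
    have hpos : (0:ℤ) < ((2 * k : ℕ) : ℤ) := by exact_mod_cast (by omega : 0 < 2 * k)
    have h0 := Int.emod_nonneg z hpos.ne'
    have h1 := Int.emod_lt_of_pos z hpos
    refine ⟨(z % ((2 * k : ℕ) : ℤ)).toNat, ?_, ?_⟩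
    · simp only [Finset.coe_range, Set.mem_Iio]; omega
    · simp only
      rw [← zpow_natCast, Int.toNat_of_nonneg h0]
      conv_rhs => rw [← Int.emod_add_mul_ediv z ((2 * k : ℕ) : ℤ), zpow_add, Equiv.Perm.mul_apply,
        zpow_mul, zpow_natCast, Equiv.Perm.zpow_apply_eq_self_of_apply_eq_self hfix]
  calc _ ≤ ((fun n : ℕ => (TT ^ n) s) '' (Finset.range (2 * k) : Set ℕ)).ncard :=
        Set.ncard_le_ncard hsub ((Finset.finite_toSet _).image _)
    _ ≤ (Finset.range (2 * k) : Set ℕ).ncard := Set.ncard_image_le (Finset.finite_toSet _)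
    _ = 2 * k := by rw [Set.ncard_coe_finset, Finset.card_range]

end orbit

end Hw

/-- For `m ≥ 4`, a degree `m`, length `2` braid system with finite Hurwitz
orbit has orbit of size at most `2·(m-1)!`. -/
theorem hurwitzOrbit_card_le_two_mul_factorial {m : ℕ} (hm : 4 ≤ m)
    (s : Fin 2 → BraidGroup m) (h : (hurwitzOrbit s).Finite) :
    (hurwitzOrbit s).ncard ≤ 2 * (m - 1).factorial := by
  obtain ⟨N, hN, hc⟩ := Hw.exists_pow_commute s h
  refine (Hw.orbit_card s (orderOf (Hw.piB m (s 0 * s 1))) (orderOf_pos _)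
    (fun i => Hw.commute_pow m (s i) _ N hN (hc i))).trans ?_
  exact Nat.mul_le_mul le_rfl (Hw.orderOf_perm_le hm _)
end
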